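/- Let q = p^f be a power of a prime p, let n ≥ 3 and suppose GU_n(q) is not solvable. Let π be a set of primes with 2 ∈ π, 3 ∉ π and p ∉ π, and let H be a solvable Hall π-subgroup of GU_n(q). Set G = H·SU_n(q). Then there exist x, y, z ∈ G such that H ∩ H^x ∩ H^y ∩ H^z is contained in the center Z(GU_n(q)), i.e. consists of scalar matrices. -/

import Mathlib

open Matrix Pointwise

/-- `H^x = x⁻¹ H x`. -/
def conjBy {G : Type*} [Group G] (H : Subgroup G) (x : G) : Subgroup G :=
  Subgroup.map ((MulAut.conj x⁻¹).toMonoidHom) H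

/-- Hall π-subgroup of the whole group. -/
def IsHallSubgroup {G : Type*} [Group G] (π : Set ℕ) (H : Subgroup G) : Prop :=
  (∀ r : ℕ, r.Prime → r ∣ Nat.card H → r ∈ π) ∧ ∀ r ∈ π, ¬ r ∣ H.index

/-- Hall π-subgroup of the subgroup `K`. -/
def IsHallSubgroupIn {G : Type*} [Group G] (π : Set ℕ) (K H : Subgroup G) : Prop :=
  H ≤ K ∧ (∀ r : ℕ, r.Prime → r ∣ Nat.card H → r ∈ π) ∧ ∀ r ∈ π, ¬ r ∣ H.relIndex K

/-- The subgroup `SL_n` of `GL_n`. -/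
def SLsub (n : ℕ) (F : Type*) [Field F] : Subgroup (GL (Fin n) F) where
  carrier := {g | Matrix.det (g : Matrix (Fin n) (Fin n) F) = 1}
  one_mem' := by simp
  mul_mem' := by
    intro a b ha hb
    simp only [Set.mem_setOf_eq, Units.val_mul, Matrix.det_mul] at *
    rw [ha, hb, one_mul]
  inv_mem' := by
    intro g hg
    simp only [Set.mem_setOf_eq] at *
    have h1 : ((g⁻¹ : GL (Fin n) F) : Matrix (Fin n) (Fin n) F) *
        (g : Matrix (Fin n) (Fin n) F) = 1 := g.inv_mul
    have := congrArg Matrix.det h1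
    rw [Matrix.det_mul, Matrix.det_one, hg, mul_one] at this
    exact this

/-- The group of similitudes of the bilinear form `B` (acting on row vectors). -/
def similitudeGroup {n : ℕ} {F : Type*} [Field F]
    (B : (Fin n → F) → (Fin n → F) → F) : Subgroup (GL (Fin n) F) where
  carrier := {g | ∃ c : Fˣ, ∀ u v : Fin n → F,
    B (Matrix.vecMul u (g : Matrix (Fin n) (Fin n) F))
      (Matrix.vecMul v (g : Matrix (Fin n) (Fin n) F)) = (c : F) * B u v}
  one_mem' := ⟨1, by simp⟩
  mul_mem' := by
    rintro a b ⟨c, hc⟩ ⟨d, hd⟩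
    refine ⟨c * d, fun u v => ?_⟩
    simp only [Units.val_mul, ← Matrix.vecMul_vecMul, hd, hc]
    ring
  inv_mem' := by
    rintro g ⟨c, hc⟩
    refine ⟨c⁻¹, fun u v => ?_⟩
    have h1 : ∀ w : Fin n → F, Matrix.vecMul
        (Matrix.vecMul w ((g⁻¹ : GL (Fin n) F) : Matrix (Fin n) (Fin n) F))
        (g : Matrix (Fin n) (Fin n) F) = w := by
      intro w
      rw [Matrix.vecMul_vecMul, g.inv_mul, Matrix.vecMul_one]
    have h2 := hc (Matrix.vecMul u ((g⁻¹ : GL (Fin n) F) : Matrix (Fin n) (Fin n) F))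
      (Matrix.vecMul v ((g⁻¹ : GL (Fin n) F) : Matrix (Fin n) (Fin n) F))
    rw [h1, h1] at h2
    rw [h2, Units.val_inv_eq_inv_val, inv_mul_cancel_left₀ (by exact_mod_cast c.ne_zero)]

/-- The isometry group of the bilinear form `B` (acting on row vectors). -/
def isometryGroup {n : ℕ} {F : Type*} [Field F]
    (B : (Fin n → F) → (Fin n → F) → F) : Subgroup (GL (Fin n) F) where
  carrier := {g | ∀ u v : Fin n → F,
    B (Matrix.vecMul u (g : Matrix (Fin n) (Fin n) F))
      (Matrix.vecMul v (g : Matrix (Fin n) (Fin n) F)) = B u v}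
  one_mem' := by simp
  mul_mem' := by
    intro a b ha hb u v
    simp only [Set.mem_setOf_eq] at ha hb
    simp only [Units.val_mul, ← Matrix.vecMul_vecMul]
    rw [hb, ha]
  inv_mem' := by
    intro g hg u v
    have h1 : ∀ w : Fin n → F, Matrix.vecMul
        (Matrix.vecMul w ((g⁻¹ : GL (Fin n) F) : Matrix (Fin n) (Fin n) F))
        (g : Matrix (Fin n) (Fin n) F) = w := by
      intro w
      rw [Matrix.vecMul_vecMul, g.inv_mul, Matrix.vecMul_one]
    have h2 := hg (Matrix.vecMul u ((g⁻¹ : GL (Fin n) F) : Matrix (Fin n) (Fin n) F))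
      (Matrix.vecMul v ((g⁻¹ : GL (Fin n) F) : Matrix (Fin n) (Fin n) F))
    rw [h1, h1] at h2
    exact h2.symm

/-- The group of similitudes of the quadratic form `Q` (acting on row vectors). -/
def qSimilitudeGroup {n : ℕ} {F : Type*} [Field F]
    (Q : (Fin n → F) → F) : Subgroup (GL (Fin n) F) where
  carrier := {g | ∃ c : Fˣ, ∀ v : Fin n → F,
    Q (Matrix.vecMul v (g : Matrix (Fin n) (Fin n) F)) = (c : F) * Q v}
  one_mem' := ⟨1, by simp⟩
  mul_mem' := by
    rintro a b ⟨c, hc⟩ ⟨d, hd⟩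
    refine ⟨c * d, fun v => ?_⟩
    simp only [Units.val_mul, ← Matrix.vecMul_vecMul, hd, hc]
    ring
  inv_mem' := by
    rintro g ⟨c, hc⟩
    refine ⟨c⁻¹, fun v => ?_⟩
    have h1 : ∀ w : Fin n → F, Matrix.vecMul
        (Matrix.vecMul w ((g⁻¹ : GL (Fin n) F) : Matrix (Fin n) (Fin n) F))
        (g : Matrix (Fin n) (Fin n) F) = w := by
      intro w
      rw [Matrix.vecMul_vecMul, g.inv_mul, Matrix.vecMul_one]
    have h2 := hc (Matrix.vecMul v ((g⁻¹ : GL (Fin n) F) : Matrix (Fin n) (Fin n) F))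
    rw [h1] at h2
    rw [h2, Units.val_inv_eq_inv_val, inv_mul_cancel_left₀ (by exact_mod_cast c.ne_zero)]

/-- The unitary group `GU_n` with respect to the field automorphism `φ`. -/
def GUgrp (n : ℕ) {K : Type*} [Field K] (φ : K →+* K) : Subgroup (GL (Fin n) K) where
  carrier := {g | ((g : Matrix (Fin n) (Fin n) K).map φ)ᵀ * (g : Matrix (Fin n) (Fin n) K) = 1}
  one_mem' := by
    simp [Matrix.map_one φ φ.map_zero φ.map_one]
  mul_mem' := by
    intro a b ha hb
    simp only [Set.mem_setOf_eq, Units.val_mul, Matrix.map_mul, Matrix.transpose_mul] at *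
    calc ((b : Matrix (Fin n) (Fin n) K).map φ)ᵀ * ((a : Matrix (Fin n) (Fin n) K).map φ)ᵀ *
          ((a : Matrix (Fin n) (Fin n) K) * (b : Matrix (Fin n) (Fin n) K))
        = ((b : Matrix (Fin n) (Fin n) K).map φ)ᵀ *
          (((a : Matrix (Fin n) (Fin n) K).map φ)ᵀ * (a : Matrix (Fin n) (Fin n) K)) *
          (b : Matrix (Fin n) (Fin n) K) := by noncomm_ring
      _ = 1 := by rw [ha, mul_one, hb]
  inv_mem' := by
    intro g hg
    simp only [Set.mem_setOf_eq] at *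
    have hcomm : (g : Matrix (Fin n) (Fin n) K) * ((g : Matrix (Fin n) (Fin n) K).map φ)ᵀ = 1 :=
      mul_eq_one_comm.mp hg
    have h1 : ((g : Matrix (Fin n) (Fin n) K) * ((g⁻¹ : GL (Fin n) K) : Matrix (Fin n) (Fin n) K)).map φ = 1 := by
      rw [g.mul_inv]
      exact Matrix.map_one φ φ.map_zero φ.map_one
    rw [Matrix.map_mul] at h1
    have h2 := congrArg Matrix.transpose h1
    rw [Matrix.transpose_mul, Matrix.transpose_one] at h2
    calc (((g⁻¹ : GL (Fin n) K) : Matrix (Fin n) (Fin n) K).map φ)ᵀ *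
          ((g⁻¹ : GL (Fin n) K) : Matrix (Fin n) (Fin n) K)
        = (((g⁻¹ : GL (Fin n) K) : Matrix (Fin n) (Fin n) K).map φ)ᵀ *
          (((g : Matrix (Fin n) (Fin n) K).map φ)ᵀ * (g : Matrix (Fin n) (Fin n) K)) *
          ((g⁻¹ : GL (Fin n) K) : Matrix (Fin n) (Fin n) K) := by rw [hg, mul_one]
      _ = ((((g⁻¹ : GL (Fin n) K) : Matrix (Fin n) (Fin n) K).map φ)ᵀ *
          ((g : Matrix (Fin n) (Fin n) K).map φ)ᵀ) *
          ((g : Matrix (Fin n) (Fin n) K) * ((g⁻¹ : GL (Fin n) K) : Matrix (Fin n) (Fin n) K)) := by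
            noncomm_ring
      _ = 1 := by rw [h2, g.mul_inv, mul_one]


/-- Simultaneous eigenspace. -/
def wtSpace {K W M : Type*} [Field K] [AddCommGroup W] [Module K W] [Group M]
    (ρ : M →* Module.End K W) (A : Subgroup M) (χ : A → K) : Submodule K W :=
  ⨅ a : A, (ρ (a : M)).eigenspace (χ a)

theorem mem_wtSpace {K W M : Type*} [Field K] [AddCommGroup W] [Module K W] [Group M]
    (ρ : M →* Module.End K W) (A : Subgroup M) (χ : A → K) (w : W) :
    w ∈ wtSpace ρ A χ ↔ ∀ a : A, ρ (a : M) w = χ a • w := by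
  simp [wtSpace, Submodule.mem_iInf]

theorem wtSpace_indep {K W M : Type*} [Field K] [AddCommGroup W] [Module K W] [Group M]
    (ρ : M →* Module.End K W) (A : Subgroup M)
    (hcomm : ∀ a ∈ A, ∀ b ∈ A, ρ a * ρ b = ρ b * ρ a) :
    iSupIndep (wtSpace ρ A) := by
  have hm : ∀ (i j : A) (c : K), Set.MapsTo (ρ (i : M))
      ((ρ (j : M)).maxGenEigenspace c : Set W) ((ρ (j : M)).maxGenEigenspace c : Set W) :=
    fun i j c => Module.End.mapsTo_maxGenEigenspace_of_comm (hcomm j j.2 i i.2) c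
  have h := Module.End.independent_iInf_maxGenEigenspace_of_forall_mapsTo
    (fun a : A => ρ (a : M)) hm
  refine iSupIndep.mono h ?_
  intro χ
  refine iInf_mono fun a => ?_
  exact ((ρ (a : M)).genEigenspace (χ a)).monotone le_top

/-- Given an abelian normal subgroup with an invariant line. -/
theorem three_dvd_of_line {K W M : Type*} [Field K] [AddCommGroup W] [Module K W]
    [FiniteDimensional K W] [Group M] [Finite M]
    (hW : Module.finrank K W = 3) (ρ : M →* Module.End K W)
    (hirr : ∀ S : Submodule K W, (∀ m, ∀ w ∈ S, ρ m w ∈ S) → S = ⊥ ∨ S = ⊤)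
    (A : Subgroup M) (hA : A.Normal)
    (hcomm : ∀ a ∈ A, ∀ b ∈ A, ρ a * ρ b = ρ b * ρ a)
    (a0 : M) (ha0 : a0 ∈ A) (hns : ¬ ∃ c : K, ρ a0 = c • 1)
    (v : W) (hv : v ≠ 0) (hline : ∀ a ∈ A, ∃ c : K, ρ a v = c • v) :
    3 ∣ Nat.card M := by
  classical
  choose! χ' hχ' using hline
  let χ : A → K := fun a => χ' a
  let act : M → (A → K) := fun m a => χ ⟨m⁻¹ * a * m, by
    have := hA.conj_mem a a.2 m⁻¹
    simpa using this⟩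
  have hinv : ∀ m : M, ∀ w, ρ m⁻¹ (ρ m w) = w := by
    intro m w
    rw [← Module.End.mul_apply, ← map_mul]; simp
  have hinv' : ∀ m : M, ∀ w, ρ m (ρ m⁻¹ w) = w := by
    intro m w
    rw [← Module.End.mul_apply, ← map_mul]; simp
  let L := wtSpace ρ A χ
  have hvL : v ∈ L := by
    rw [mem_wtSpace]; intro a; exact hχ' a a.2
  have hmap : ∀ m, L.map (ρ m) = wtSpace ρ A (act m) := by
    intro m
    ext w
    rw [Submodule.mem_map, mem_wtSpace]
    constructor
    · rintro ⟨u, hu, rfl⟩ a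
      rw [mem_wtSpace] at hu
      have := hu ⟨m⁻¹ * a * m, by
        have := hA.conj_mem a a.2 m⁻¹
        simpa using this⟩
      simp only at this
      have h2 := congrArg (ρ m) this
      rw [map_smul] at h2
      rw [← h2]
      rw [← Module.End.mul_apply, ← map_mul, ← Module.End.mul_apply, ← map_mul]
      congr 2; group
    · intro h
      refine ⟨ρ m⁻¹ w, ?_, hinv' m w⟩
      rw [mem_wtSpace]
      intro a
      have := h ⟨m * a * m⁻¹, hA.conj_mem a a.2 m⟩
      have e : act m ⟨m * a * m⁻¹, hA.conj_mem a a.2 m⟩ = χ a := by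
        simp only [act]; congr 1; ext; simp; group
      rw [e] at this
      have h2 := congrArg (ρ m⁻¹) this
      rw [map_smul] at h2
      rw [← h2]
      rw [← Module.End.mul_apply, ← map_mul, ← Module.End.mul_apply, ← map_mul]
      congr 2; simp; group
  let St : Subgroup M := 
    { carrier := {m | L.map (ρ m) = L}
      one_mem' := by simp [Module.End.one_eq_id]
      mul_mem' := by
        intro a b ha hb
        simp only [Set.mem_ofPred_eq] at *
        rw [map_mul, Module.End.mul_eq_comp, Submodule.map_comp, hb, ha]
      inv_mem' := by
        intro a ha
        simp only [Set.mem_ofPred_eq] at *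
        conv_lhs => rw [← ha]
        rw [← Submodule.map_comp, ← Module.End.mul_eq_comp, ← map_mul]
        simp [Module.End.one_eq_id] }
  have hSt : ∀ m m' : M, L.map (ρ m) = L.map (ρ m') → m⁻¹ * m' ∈ St := by
    intro m m' h
    change L.map (ρ (m⁻¹ * m')) = L
    rw [map_mul, Module.End.mul_eq_comp, Submodule.map_comp, ← h,
      ← Submodule.map_comp, ← Module.End.mul_eq_comp, ← map_mul]
    simp [Module.End.one_eq_id]
  let F : M ⧸ St → Submodule K W := fun x => L.map (ρ x.out)
  have hFmk : ∀ m : M, F (m : M ⧸ St) = L.map (ρ m) := by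
    intro m
    obtain ⟨s, hs⟩ := QuotientGroup.mk_out_eq_mul St m
    simp only [F]
    rw [hs, map_mul, Module.End.mul_eq_comp, Submodule.map_comp]
    congr 1
    exact s.2
  have hind : iSupIndep F := by
    have h1 := wtSpace_indep ρ A hcomm
    have hinj : Function.Injective (fun x : M ⧸ St => act x.out) := by
      intro x y hxy
      simp only at hxy
      have : L.map (ρ x.out) = L.map (ρ y.out) := by rw [hmap, hmap, hxy]
      have := hSt _ _ this
      rw [← QuotientGroup.eq] at this
      simpa using this
    have h2 := h1.comp hinj
    have : F = wtSpace ρ A ∘ (fun x : M ⧸ St => act x.out) := by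
      funext x; exact hmap _
    rw [this]; exact h2
  have hsup : iSup F = ⊤ := by
    have hinvF : ∀ m, ∀ w ∈ iSup F, ρ m w ∈ iSup F := by
      intro m w hw
      have : (iSup F).map (ρ m) ≤ iSup F := by
        rw [Submodule.map_iSup]
        refine iSup_le fun x => ?_
        have : (F x).map (ρ m) = F ((m * x.out : M) : M ⧸ St) := by
          rw [hFmk, map_mul, Module.End.mul_eq_comp, Submodule.map_comp]
        rw [this]
        exact le_iSup F _
      exact this (Submodule.mem_map_of_mem hw)
    refine (hirr (iSup F) hinvF).resolve_left fun h => ?_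
    have : v ∈ iSup F := by
      have h3 : L ≤ iSup F := by
        have := le_iSup F ((1 : M) : M ⧸ St)
        rw [hFmk] at this
        simpa [Module.End.one_eq_id] using this
      exact h3 hvL
    rw [h] at this
    exact hv (by simpa using this)
  have hint := DirectSum.isInternal_submodule_of_iSupIndep_of_iSup_eq_top hind hsup
  have : Fintype (M ⧸ St) := Fintype.ofFinite _
  have hfr : ∀ x, Module.finrank K (F x) = Module.finrank K L := by
    intro x
    have hi : Function.Injective (ρ x.out) := Function.LeftInverse.injective (hinv x.out)
    exact (Submodule.equivMapOfInjective (ρ x.out) hi L).finrank_eq.symm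
  have hsum : Module.finrank K W = Fintype.card (M ⧸ St) * Module.finrank K L := by
    let e := LinearEquiv.ofBijective (DirectSum.coeLinearMap F) hint
    rw [← e.finrank_eq, Module.finrank_directSum]
    simp [hfr]
  rw [hW] at hsum
  have hidx : Fintype.card (M ⧸ St) ∣ Nat.card M := by
    rw [← Nat.card_eq_fintype_card]
    exact Subgroup.card_quotient_dvd_card St
  have hd : Fintype.card (M ⧸ St) ∣ 3 := ⟨_, hsum⟩
  rcases (Nat.dvd_prime Nat.prime_three).1 hd with h | h
  · exfalso
    rw [h, one_mul] at hsum
    have : L = ⊤ := Submodule.eq_top_of_finrank_eq (by rw [← hsum, hW])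
    apply hns
    refine ⟨χ ⟨a0, ha0⟩, ?_⟩
    ext w
    have hw : w ∈ L := by rw [this]; trivial
    rw [mem_wtSpace] at hw
    simpa using hw ⟨a0, ha0⟩
  · rw [h] at hidx; exact hidx

open scoped commutatorElement in
theorem three_dvd_card {K W M : Type*} [Field K] [AddCommGroup W] [Module K W]
    [FiniteDimensional K W] [Group M] [Finite M] [Group.IsSolvable M]
    (hW : Module.finrank K W = 3) (ρ : M →* Module.End K W)
    (hirr : ∀ S : Submodule K W, (∀ m, ∀ w ∈ S, ρ m w ∈ S) → S = ⊥ ∨ S = ⊤)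
    (r : M) (f : W →ₗ[K] K) (b w0 : W) (hb : b ≠ 0) (hw0 : f w0 ≠ 0)
    (hr : ∀ w, ρ r w = w - f w • b) : 3 ∣ Nat.card M := by
  by_contra h3
  have hntW : Nontrivial W := Module.nontrivial_of_finrank_pos (R := K) (by omega)
  have hsc : ∃ k, (∃ a ∈ derivedSeries M k, ¬ ∃ c : K, ρ a = c • 1) ∧
      ∀ a ∈ derivedSeries M (k + 1), ∃ c : K, ρ a = c • 1 := by
    by_contra hcon
    push Not at hcon
    have hall : ∀ k, ∃ a ∈ derivedSeries M k, ∀ c : K, ρ a ≠ c • 1 := by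
      intro k
      induction k with
      | zero =>
        by_contra h0
        push Not at h0
        have hinv : ∀ m, ∀ w ∈ Submodule.span K {b}, ρ m w ∈ Submodule.span K {b} := by
          intro m w hw
          obtain ⟨c, hc⟩ := h0 m (by simp)
          rw [hc]
          exact Submodule.smul_mem _ c hw
        rcases hirr _ hinv with h | h
        · exact hb (by simpa using h)
        · have h1 := finrank_span_singleton (K := K) hb
          rw [h, finrank_top] at h1
          omega
      | succ k ih => exact hcon k ih
    obtain ⟨N, hN⟩ := (Group.isSolvable_def M).1 inferInstance
    obtain ⟨a, ha, hc⟩ := hall N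
    rw [hN, Subgroup.mem_bot] at ha
    exact hc 1 (by rw [ha]; simp)
  obtain ⟨k, ⟨a0, ha0, hns⟩, hk⟩ := hsc
  have hA := derivedSeries_normal M k
  generalize hAdef : derivedSeries M k = A at *
  have hcomm : ∀ a ∈ A, ∀ b ∈ A, ρ a * ρ b = ρ b * ρ a := by
    intro a ha b hb
    have hm : ⁅a, b⁆ ∈ derivedSeries M (k + 1) := by
      rw [derivedSeries_succ, hAdef]
      exact Subgroup.commutator_mem_commutator ha hb
    obtain ⟨z, hz⟩ := hk _ hm
    have hd : LinearMap.det (ρ ⁅a, b⁆) = 1 := by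
      have h1 : ∀ m, LinearMap.det (ρ m) * LinearMap.det (ρ m⁻¹) = 1 := by
        intro m
        rw [← map_mul, ← map_mul]; simp
      rw [commutatorElement_def, map_mul, map_mul, map_mul, map_mul, map_mul, map_mul]
      calc _ = (LinearMap.det (ρ a) * LinearMap.det (ρ a⁻¹)) *
          (LinearMap.det (ρ b) * LinearMap.det (ρ b⁻¹)) := by ring
        _ = 1 := by rw [h1, h1, one_mul]
    have hz3 : z ^ 3 = 1 := by
      rw [hz, LinearMap.det_smul, hW] at hd
      simpa using hd
    have hzN : z ^ Nat.card M = 1 := by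
      have h1 : (ρ ⁅a, b⁆) ^ Nat.card M = 1 := by
        rw [← map_pow, pow_card_eq_one', map_one]
      rw [hz, smul_pow, one_pow] at h1
      obtain ⟨w, hw⟩ := exists_ne (0 : W)
      have h2 := congrArg (fun g : Module.End K W => g w) h1
      simp only [LinearMap.smul_apply, Module.End.one_apply] at h2
      have h4 : (z ^ Nat.card M - 1) • w = 0 := by rw [sub_smul, h2, one_smul, sub_self]
      rcases smul_eq_zero.1 h4 with h | h
      · exact sub_eq_zero.1 h
      · exact absurd h hw
    have hz1 : z = 1 := by
      have hcop : Nat.Coprime 3 (Nat.card M) := (Nat.Prime.coprime_iff_not_dvd Nat.prime_three).2 h3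
      have h1 := Nat.dvd_gcd (orderOf_dvd_of_pow_eq_one hz3) (orderOf_dvd_of_pow_eq_one hzN)
      rw [hcop] at h1
      exact orderOf_eq_one_iff.1 (Nat.dvd_one.1 h1)
    rw [hz1, one_smul] at hz
    have : a * b = ⁅a, b⁆ * (b * a) := by rw [commutatorElement_def]; group
    rw [← map_mul, this, map_mul, hz, one_mul, map_mul]
  have hline : ∃ v : W, v ≠ 0 ∧ ∀ a ∈ A, ∃ c : K, ρ a v = c • v := by
    by_cases hc : ∀ a ∈ A, ∃ c : K, ρ a b = c • b
    · exact ⟨b, hb, hc⟩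
    push Not at hc
    obtain ⟨a, ha, hab⟩ := hc
    let y := a * r * a⁻¹ * r⁻¹
    have hy : y ∈ A := by
      have : y = a * (r * a⁻¹ * r⁻¹) := by simp only [y]; group
      rw [this]
      exact A.mul_mem ha (hA.conj_mem _ (A.inv_mem ha) r)
    have hinv : ∀ m : M, ∀ w, ρ m⁻¹ (ρ m w) = w := by
      intro m w
      rw [← Module.End.mul_apply, ← map_mul]; simp
    have hinv' : ∀ m : M, ∀ w, ρ m (ρ m⁻¹ w) = w := by
      intro m w
      rw [← Module.End.mul_apply, ← map_mul]; simp
    let X : Module.End K W := ρ y - 1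
    have hXc : ∀ a ∈ A, ∀ w, X (ρ a w) = ρ a (X w) := by
      intro a ha w
      have := congrArg (fun g : Module.End K W => g w) (hcomm y hy a ha)
      simp only [Module.End.mul_apply] at this
      simp only [X, LinearMap.sub_apply, Module.End.one_apply, map_sub, this]
    have hX0 : X ≠ 0 := by
      intro h0
      have hy1 : ρ y = 1 := sub_eq_zero.1 h0
      have e : ρ (a * r) = ρ (r * a) := by
        have : a * r = y * (r * a) := by simp only [y]; group
        rw [this, map_mul, hy1, one_mul]
      have e2 := congrArg (fun g : Module.End K W => g w0) e
      simp only [map_mul, Module.End.mul_apply, hr, map_sub, map_smul] at e2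
      have e3 : f w0 • ρ a b = f (ρ a w0) • b := sub_right_injective e2
      apply hab ((f w0)⁻¹ * f (ρ a w0))
      rw [mul_smul, ← e3, smul_smul, inv_mul_cancel₀ hw0, one_smul]
    have hrange : 1 ≤ Module.finrank K (LinearMap.range X) := by
      by_contra hlt
      have : Module.finrank K (LinearMap.range X) = 0 := by omega
      rw [Submodule.finrank_eq_zero, LinearMap.range_eq_bot] at this
      exact hX0 this
    have hker : 1 ≤ Module.finrank K (LinearMap.ker X) := by
      let g : W →ₗ[K] (K × K) := f.prod (f ∘ₗ ρ a⁻¹)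
      have hle : LinearMap.ker g ≤ LinearMap.ker X := by
        intro w hw
        rw [LinearMap.mem_ker] at hw ⊢
        have h1 : f w = 0 := congrArg Prod.fst hw
        have h2 : f (ρ a⁻¹ w) = 0 := congrArg Prod.snd hw
        have h4 : ρ r⁻¹ w = w := by
          have := hinv r w
          rwa [hr, h1, zero_smul, sub_zero] at this
        simp only [X, y, LinearMap.sub_apply, map_mul, Module.End.mul_apply, Module.End.one_apply]
        rw [h4, hr, h2, zero_smul, sub_zero, hinv', sub_self]
      have h1 := Submodule.finrank_mono hle
      have h2 := LinearMap.finrank_range_add_finrank_ker g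
      have h4 := Submodule.finrank_le (LinearMap.range g)
      rw [Module.finrank_prod, Module.finrank_self] at h4
      omega
    have hrk := LinearMap.finrank_range_add_finrank_ker X
    rw [hW] at hrk
    have key : ∀ S : Submodule K W, Module.finrank K S = 1 → (∀ a ∈ A, ∀ w ∈ S, ρ a w ∈ S) →
        ∃ v : W, v ≠ 0 ∧ ∀ a ∈ A, ∃ c : K, ρ a v = c • v := by
      intro S hS hSA
      obtain ⟨v, hv, hg⟩ := finrank_eq_one_iff'.1 hS
      refine ⟨v, by simpa using hv, fun a ha => ?_⟩
      obtain ⟨c, hc⟩ := hg ⟨ρ a v, hSA a ha v v.2⟩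
      exact ⟨c, by simpa using (congrArg Subtype.val hc).symm⟩
    by_cases h1 : Module.finrank K (LinearMap.ker X) = 1
    · refine key _ h1 ?_
      intro a ha w hw
      rw [LinearMap.mem_ker] at hw ⊢
      rw [hXc a ha, hw, map_zero]
    · refine key (LinearMap.range X) (by omega) ?_
      rintro a ha _ ⟨w, rfl⟩
      exact ⟨ρ a w, hXc a ha w⟩
  obtain ⟨v, hv, hl⟩ := hline
  exact h3 (three_dvd_of_line hW ρ hirr A hA hcomm a0 ha0 hns v hv hl)


/-- The hermitian form. -/
def HB {n : ℕ} {K : Type*} [Field K] (φ : K →+* K) (u : Fin n → K) : (Fin n → K) →ₗ[K] K where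
  toFun v := ∑ i, φ (u i) * v i
  map_add' := by intro x y; simp [mul_add, Finset.sum_add_distrib]
  map_smul' := by
    intro c x
    simp only [Pi.smul_apply, smul_eq_mul, RingHom.id_apply, Finset.mul_sum]
    exact Finset.sum_congr rfl fun i _ => by ring

theorem HB_apply {n : ℕ} {K : Type*} [Field K] (φ : K →+* K) (u v : Fin n → K) :
    HB φ u v = ∑ i, φ (u i) * v i := rfl

theorem HB_conj {n : ℕ} {K : Type*} [Field K] (φ : K →+* K) (hφφ : ∀ x, φ (φ x) = x)
    (u v : Fin n → K) : φ (HB φ u v) = HB φ v u := by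
  simp only [HB_apply, map_sum, map_mul, hφφ]
  exact Finset.sum_congr rfl fun i _ => by ring

theorem HB_single {n : ℕ} {K : Type*} [Field K] (φ : K →+* K) (i : Fin n) (v : Fin n → K) :
    HB φ (Pi.single i 1) v = v i := by
  rw [HB_apply, Finset.sum_eq_single i]
  · simp
  · intro b _ hb; simp [hb]
  · simp

theorem HB_eq {n : ℕ} {K : Type*} [Field K] (φ : K →+* K) (u v : Fin n → K) :
    HB φ u v = (φ ∘ u) ⬝ᵥ v := rfl

theorem HB_unitary {n : ℕ} {K : Type*} [Field K] (φ : K →+* K) (g : GL (Fin n) K)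
    (hg : g ∈ GUgrp n φ) (u v : Fin n → K) :
    HB φ ((g : Matrix (Fin n) (Fin n) K) *ᵥ u) ((g : Matrix (Fin n) (Fin n) K) *ᵥ v) = HB φ u v := by
  have hg' : ((g : Matrix (Fin n) (Fin n) K).map φ)ᵀ * (g : Matrix (Fin n) (Fin n) K) = 1 := hg
  have h1 : φ ∘ ((g : Matrix (Fin n) (Fin n) K) *ᵥ u) =
      (φ ∘ u) ᵥ* ((g : Matrix (Fin n) (Fin n) K).map φ)ᵀ := by
    rw [Matrix.vecMul_transpose]
    funext i
    simp [Matrix.mulVec, dotProduct, map_sum]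
  rw [HB_eq, HB_eq, h1, ← Matrix.dotProduct_mulVec, Matrix.mulVec_mulVec, hg', Matrix.one_mulVec]

/-- `a` is the root of a reflection in `H`. -/
def IsRt {n : ℕ} {K : Type*} [Field K] (φ : K →+* K) (H : Subgroup (GL (Fin n) K))
    (a : Fin n → K) : Prop :=
  HB φ a a ≠ 0 ∧ ∃ r ∈ H, ∀ x : Fin n → K,
    (r : Matrix (Fin n) (Fin n) K) *ᵥ x = x - (2 / HB φ a a * HB φ a x) • a

theorem IsRt.conj {n : ℕ} {K : Type*} [Field K] {φ : K →+* K} {H : Subgroup (GL (Fin n) K)}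
    (hH : H ≤ GUgrp n φ) {a : Fin n → K} (ha : IsRt φ H a) {h : GL (Fin n) K} (hh : h ∈ H) :
    IsRt φ H ((h : Matrix (Fin n) (Fin n) K) *ᵥ a) := by
  obtain ⟨h0, r, hr, hrx⟩ := ha
  refine ⟨by rwa [HB_unitary φ h (hH hh)], h * r * h⁻¹,
    H.mul_mem (H.mul_mem hh hr) (H.inv_mem hh), fun x => ?_⟩
  have e : (h : Matrix (Fin n) (Fin n) K) *ᵥ (((h⁻¹ : GL (Fin n) K) : Matrix (Fin n) (Fin n) K) *ᵥ x)
      = x := by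
    rw [Matrix.mulVec_mulVec, h.mul_inv, Matrix.one_mulVec]
  have e2 : HB φ ((h : Matrix (Fin n) (Fin n) K) *ᵥ a) x =
      HB φ a (((h⁻¹ : GL (Fin n) K) : Matrix (Fin n) (Fin n) K) *ᵥ x) := by
    rw [← HB_unitary φ h (hH hh) a, e]
  rw [Units.val_mul, Units.val_mul, ← Matrix.mulVec_mulVec, ← Matrix.mulVec_mulVec, hrx,
    HB_unitary φ h (hH hh), e2, Matrix.mulVec_sub, Matrix.mulVec_smul, e]

/-- Stabilizer in `H` of a subspace. -/
def stabU {n : ℕ} {K : Type*} [Field K] (H : Subgroup (GL (Fin n) K))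
    (U : Submodule K (Fin n → K)) : Subgroup (GL (Fin n) K) where
  carrier := {g | g ∈ H ∧ (∀ u ∈ U, (g : Matrix (Fin n) (Fin n) K) *ᵥ u ∈ U) ∧
    ∀ u ∈ U, ((g⁻¹ : GL (Fin n) K) : Matrix (Fin n) (Fin n) K) *ᵥ u ∈ U}
  one_mem' := by simp [H.one_mem]
  mul_mem' := by
    rintro a b ⟨ha, ha1, ha2⟩ ⟨hb, hb1, hb2⟩
    refine ⟨H.mul_mem ha hb, fun u hu => ?_, fun u hu => ?_⟩
    · rw [Units.val_mul, ← Matrix.mulVec_mulVec]; exact ha1 _ (hb1 _ hu)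
    · rw [_root_.mul_inv_rev, Units.val_mul, ← Matrix.mulVec_mulVec]; exact hb2 _ (ha2 _ hu)
  inv_mem' := by
    rintro a ⟨ha, ha1, ha2⟩
    exact ⟨H.inv_mem ha, ha2, by simpa using ha1⟩

/-- The representation of the stabilizer on the subspace. -/
def repU {n : ℕ} {K : Type*} [Field K] (H : Subgroup (GL (Fin n) K))
    (U : Submodule K (Fin n → K)) : stabU H U →* Module.End K U where
  toFun m := (Matrix.mulVecLin ((m : GL (Fin n) K) : Matrix (Fin n) (Fin n) K)).restrict m.2.2.1
  map_one' := by ext; simp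
  map_mul' := by
    intro a b
    refine LinearMap.ext fun u => Subtype.ext ?_
    change ((a * b : GL (Fin n) K) : Matrix (Fin n) (Fin n) K) *ᵥ (u : Fin n → K) =
      ((a : GL (Fin n) K) : Matrix (Fin n) (Fin n) K) *ᵥ
        (((b : GL (Fin n) K) : Matrix (Fin n) (Fin n) K) *ᵥ (u : Fin n → K))
    rw [Matrix.mulVec_mulVec, Units.val_mul]

theorem repU_apply {n : ℕ} {K : Type*} [Field K] (H : Subgroup (GL (Fin n) K))
    (U : Submodule K (Fin n → K)) (m : stabU H U) (u : U) :
    ((repU H U m u : U) : Fin n → K) = ((m : GL (Fin n) K) : Matrix (Fin n) (Fin n) K) *ᵥ u := rfl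

theorem no_triple {n p : ℕ} {K : Type*} [Field K] [Finite K] [CharP K p] (hp2 : (2 : K) ≠ 0)
    (φ : K →+* K) (hφφ : ∀ x, φ (φ x) = x)
    (H : Subgroup (GL (Fin n) K)) (hsolv : Group.IsSolvable H)
    (h3 : ¬ 3 ∣ Nat.card H) (hp : ¬ p ∣ Nat.card H) (x y z : Fin n → K)
    (hx : IsRt φ H x) (hy : IsRt φ H y) (hz : IsRt φ H z)
    (hxz : HB φ x z = 0) (hxy : HB φ x y ≠ 0) (hzy : HB φ z y ≠ 0)
    (hli : LinearIndependent K ![x, y, z]) : False := by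
  have hsym : ∀ u v : Fin n → K, HB φ u v = 0 → HB φ v u = 0 := by
    intro u v h
    rw [← HB_conj φ hφφ, h, map_zero]
  have hzx := hsym _ _ hxz
  have hyx : HB φ y x ≠ 0 := fun h => hxy (hsym _ _ h)
  have hyz : HB φ y z ≠ 0 := fun h => hzy (hsym _ _ h)
  let U : Submodule K (Fin n → K) := Submodule.span K (Set.range ![x, y, z])
  have hxU : x ∈ U := Submodule.subset_span ⟨0, rfl⟩
  have hyU : y ∈ U := Submodule.subset_span ⟨1, rfl⟩
  have hzU : z ∈ U := Submodule.subset_span ⟨2, rfl⟩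
  have hU3 : Module.finrank K U = 3 := by
    rw [finrank_span_eq_card hli]; simp
  by_cases hnd : ∀ v ∈ U, HB φ x v = 0 → HB φ y v = 0 → HB φ z v = 0 → v = 0
  · -- nondegenerate case
    have hrM : ∀ a ∈ U, IsRt φ H a → ∃ r : stabU H U, ∀ u : U,
        ((repU H U r u : U) : Fin n → K) = u - (2 / HB φ a a * HB φ a u) • a := by
      rintro a haU ⟨ha0, r, hr, hrx⟩
      have hinv : ∀ u, ((r⁻¹ : GL (Fin n) K) : Matrix (Fin n) (Fin n) K) *ᵥ u =
          (r : Matrix (Fin n) (Fin n) K) *ᵥ u := by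
        intro u
        have h1 : (r : Matrix (Fin n) (Fin n) K) *ᵥ ((r : Matrix (Fin n) (Fin n) K) *ᵥ u) = u := by
          rw [hrx, hrx, map_sub, map_smul, sub_sub, ← add_smul]
          have : 2 / HB φ a a * HB φ a u + 2 / HB φ a a *
              (HB φ a u - (2 / HB φ a a * HB φ a u) • HB φ a a) = 0 := by
            rw [smul_eq_mul]; field_simp; ring
          rw [this, zero_smul, sub_zero]
        conv_lhs => rw [← h1]
        rw [Matrix.mulVec_mulVec, r.inv_mul, Matrix.one_mulVec]
      have hmem : ∀ u ∈ U, (r : Matrix (Fin n) (Fin n) K) *ᵥ u ∈ U := by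
        intro u hu
        rw [hrx]
        exact U.sub_mem hu (U.smul_mem _ haU)
      refine ⟨⟨r, hr, hmem, fun u hu => by rw [hinv]; exact hmem u hu⟩, fun u => ?_⟩
      rw [repU_apply]
      exact hrx u
    have hkey : ∀ S : Submodule K U, (∀ m, ∀ w ∈ S, repU H U m w ∈ S) →
        ∀ a (haU : a ∈ U), IsRt φ H a → ∀ s ∈ S, HB φ a (s : Fin n → K) ≠ 0 →
          (⟨a, haU⟩ : U) ∈ S := by
      intro S hS a haU ha s hs hne
      obtain ⟨r, hr⟩ := hrM a haU ha
      have h1 := S.sub_mem hs (hS r s hs)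
      have h2 : s - repU H U r s = (2 / HB φ a a * HB φ a s) • (⟨a, haU⟩ : U) := by
        ext1
        simp [hr]
      rw [h2] at h1
      have hc : 2 / HB φ a a * HB φ a s ≠ 0 := mul_ne_zero (div_ne_zero hp2 ha.1) hne
      exact (S.smul_mem_iff hc).1 h1
    have hirr : ∀ S : Submodule K U, (∀ m, ∀ w ∈ S, repU H U m w ∈ S) → S = ⊥ ∨ S = ⊤ := by
      intro S hS
      by_cases hbot : S = ⊥
      · exact Or.inl hbot
      right
      obtain ⟨s, hs, hs0⟩ := S.ne_bot_iff.1 hbot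
      have hy' : (⟨y, hyU⟩ : U) ∈ S := by
        by_contra hyS
        have h2 : HB φ y s = 0 := by
          by_contra h; exact hyS (hkey S hS y hyU hy s hs h)
        have h1 : HB φ x s = 0 := by
          by_contra h
          exact hyS (hkey S hS y hyU hy _ (hkey S hS x hxU hx s hs h) hyx)
        have h3 : HB φ z s = 0 := by
          by_contra h
          exact hyS (hkey S hS y hyU hy _ (hkey S hS z hzU hz s hs h) hyz)
        exact hs0 (Subtype.ext (hnd s s.2 h1 h2 h3))
      have hx' := hkey S hS x hxU hx _ hy' hxy
      have hz' := hkey S hS z hzU hz _ hy' hzy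
      have hle : U ≤ S.map U.subtype := by
        refine Submodule.span_le.2 ?_
        rintro _ ⟨i, rfl⟩
        fin_cases i
        · exact ⟨_, hx', rfl⟩
        · exact ⟨_, hy', rfl⟩
        · exact ⟨_, hz', rfl⟩
      rw [Submodule.eq_top_iff']
      intro u
      obtain ⟨s', hs', he⟩ := hle u.2
      have : s' = u := Subtype.ext he
      exact this ▸ hs'
    obtain ⟨r, hr⟩ := hrM y hyU hy
    have hle : stabU H U ≤ H := fun g hg => hg.1
    have : Group.IsSolvable (stabU H U) :=
      Group.isSolvable_of_isSolvable_injective (Subgroup.inclusion_injective hle)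
    have h := three_dvd_card hU3 (repU H U) hirr r
      ((2 / HB φ y y) • (HB φ y ∘ₗ U.subtype)) ⟨y, hyU⟩ ⟨y, hyU⟩
      (by
        intro h
        have h0 : y = 0 := congrArg Subtype.val h
        exact hy.1 (by rw [h0, map_zero]))
      (by
        simp [hy.1, hp2])
      (by
        intro w
        ext1
        rw [hr]
        simp)
    exact h3 (h.trans (Subgroup.card_dvd_of_le hle))
  · -- degenerate case
    push Not at hnd
    obtain ⟨v, hvU, hxv, hyv, hzv, hv0⟩ := hnd
    have : ∃ α β γ : K, v = α • x + β • y + γ • z := by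
      obtain ⟨c, hc⟩ := (Submodule.mem_span_range_iff_exists_fun K).1 hvU
      refine ⟨c 0, c 1, c 2, ?_⟩
      rw [← hc]; simp [Fin.sum_univ_three]
    obtain ⟨α, β, γ, hv⟩ := this
    rw [hv] at hxv hyv hzv
    simp only [map_add, map_smul, smul_eq_mul, hxz, hzx, mul_zero, add_zero, zero_add] at hxv hyv hzv
    have hβ : β ≠ 0 := by
      rintro rfl
      have h1 : α = 0 := by simpa [hx.1] using hxv
      have h2 : γ = 0 := by simpa [hz.1] using hzv
      exact hv0 (by rw [hv, h1, h2]; simp)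
    obtain ⟨hx0, rx, hrx, hrx'⟩ := hx
    obtain ⟨hy0, ry, hry, hry'⟩ := hy
    obtain ⟨hz0, rz, hrz, hrz'⟩ := hz
    let t := rx * rz * ry
    have ht : t ∈ H := H.mul_mem (H.mul_mem hrx hrz) hry
    have ht' : ∀ u, (t : Matrix (Fin n) (Fin n) K) *ᵥ u = (rx : Matrix (Fin n) (Fin n) K) *ᵥ
        ((rz : Matrix (Fin n) (Fin n) K) *ᵥ ((ry : Matrix (Fin n) (Fin n) K) *ᵥ u)) := by
      intro u
      simp only [t, Units.val_mul, Matrix.mulVec_mulVec, Matrix.mul_assoc]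
    have exv : HB φ x v = 0 := by rw [hv]; simpa [hxz] using hxv
    have eyv : HB φ y v = 0 := by rw [hv]; simpa using hyv
    have ezv : HB φ z v = 0 := by rw [hv]; simpa [hzx] using hzv
    have htv : (t : Matrix (Fin n) (Fin n) K) *ᵥ v = v := by
      rw [ht', hry', eyv, mul_zero, zero_smul, sub_zero, hrz', ezv, mul_zero, zero_smul, sub_zero,
        hrx', exv, mul_zero, zero_smul, sub_zero]
    have e1 : HB φ x y / HB φ x x = - α / β := by
      field_simp
      linear_combination hxv
    have e2 : HB φ z y / HB φ z z = - γ / β := by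
      field_simp
      linear_combination hzv
    have hty : (t : Matrix (Fin n) (Fin n) K) *ᵥ y = y - (2 / β) • v := by
      have h1 : y - (2 / HB φ y y * HB φ y y) • y = -y := by
        rw [div_mul_cancel₀ _ hy0, two_smul]; abel
      have h2 : 2 / HB φ z z * HB φ z y = - (2 * γ / β) := by
        rw [div_mul_eq_mul_div, mul_div_assoc, e2]; ring
      have h4 : 2 / HB φ x x * HB φ x y = - (2 * α / β) := by
        rw [div_mul_eq_mul_div, mul_div_assoc, e1]; ring
      rw [ht', hry', h1, hrz', map_neg, mul_neg, h2, hrx', map_sub, map_smul, map_neg, hxz,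
        smul_zero, sub_zero, mul_neg, h4, hv]
      funext i
      simp only [Pi.sub_apply, Pi.add_apply, Pi.smul_apply, Pi.neg_apply, smul_eq_mul]
      field_simp
      ring
    have hpow : ∀ j : ℕ, ((t ^ j : GL (Fin n) K) : Matrix (Fin n) (Fin n) K) *ᵥ y =
        y - ((j : K) * (2 / β)) • v := by
      intro j
      induction j with
      | zero => simp
      | succ j ih =>
        rw [pow_succ', Units.val_mul, ← Matrix.mulVec_mulVec, ih, Matrix.mulVec_sub,
          Matrix.mulVec_smul, htv, hty, Nat.cast_succ, add_mul, add_smul, one_mul]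
        abel
    have hN : t ^ Nat.card H = 1 := by
      have := pow_card_eq_one' (x := (⟨t, ht⟩ : H))
      exact congrArg Subtype.val this
    have h1 := hpow (Nat.card H)
    rw [hN, Units.val_one, Matrix.one_mulVec] at h1
    have h2 : (((Nat.card H : ℕ) : K) * (2 / β)) • v = 0 := by
      have := sub_eq_self.1 h1.symm
      exact this
    rcases smul_eq_zero.1 h2 with h | h
    · rcases mul_eq_zero.1 h with h | h
      · exact hp ((CharP.cast_eq_zero_iff K p _).1 h)
      · exact (div_ne_zero hp2 hβ) h
    · exact hv0 h


theorem HB_add_smul_left {n : ℕ} {K : Type*} [Field K] (φ : K →+* K) (x a y : Fin n → K) (c : K) :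
    HB φ (x + c • a) y = HB φ x y + φ c * HB φ a y := by
  simp only [HB_apply, Pi.add_apply, Pi.smul_apply, smul_eq_mul, map_add, map_mul, add_mul,
    Finset.sum_add_distrib, Finset.mul_sum, mul_assoc]

/-- Unitary quasi-reflections and transvections. -/
theorem exists_qrefl {n : ℕ} {K : Type*} [Field K] (φ : K →+* K) (hφφ : ∀ x, φ (φ x) = x)
    (a : Fin n → K) (l : K) (hl : l + φ l + l * φ l * HB φ a a = 0) :
    ∃ g ∈ GUgrp n φ, ∀ x, (g : Matrix (Fin n) (Fin n) K) *ᵥ x = x + (l * HB φ a x) • a := by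
  let M : Matrix (Fin n) (Fin n) K := 1 + l • Matrix.vecMulVec a (φ ∘ a)
  have hM : ∀ x, M *ᵥ x = x + (l * HB φ a x) • a := by
    intro x
    simp only [M, Matrix.add_mulVec, Matrix.one_mulVec, Matrix.smul_mulVec,
      Matrix.vecMulVec_mulVec]
    rw [← HB_eq]
    funext i
    simp
    ring
  have hMM : (M.map φ)ᵀ * M = 1 := by
    have h1 : ∀ i j, ((M.map φ)ᵀ * M) i j =
        HB φ (M *ᵥ Pi.single i 1) (M *ᵥ Pi.single j 1) := by
      intro i j
      rw [Matrix.mulVec_single_one, Matrix.mulVec_single_one, Matrix.mul_apply, HB_apply]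
      rfl
    ext i j
    rw [h1, hM, hM, HB_add_smul_left, map_add, map_add, map_smul, map_smul, HB_single]
    rw [map_mul, HB_conj φ hφφ, HB_single]
    rw [← HB_conj φ hφφ (Pi.single j 1) a, HB_single]
    simp only [smul_eq_mul]
    have h1' : (1 : Matrix (Fin n) (Fin n) K) i j = (Pi.single j 1 : Fin n → K) i := by
      rw [Matrix.one_apply, Pi.single_apply]
    rw [h1']
    linear_combination (φ (a j) * a i) * hl
  refine ⟨⟨M, (M.map φ)ᵀ, mul_eq_one_comm.1 hMM, hMM⟩, hMM, hM⟩

/-- Signed permutation matrices preserving the blocks. -/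
def InT {n : ℕ} {K : Type*} [Field K] (g : GL (Fin n) K) : Prop :=
  ∃ (σ : Equiv.Perm (Fin n)) (ε : Fin n → K), (∀ i, (σ i : ℕ) / 2 = (i : ℕ) / 2) ∧
    (∀ i, ε i * ε i = 1) ∧
    ∀ i, (g : Matrix (Fin n) (Fin n) K) *ᵥ Pi.single i 1 = ε i • Pi.single (σ i) 1

theorem InT.mul {n : ℕ} {K : Type*} [Field K] {g h : GL (Fin n) K} (hg : InT g) (hh : InT h) :
    InT (g * h) := by
  obtain ⟨σ, ε, h1, h2, h3⟩ := hg
  obtain ⟨τ, δ, k1, k2, k3⟩ := hh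
  refine ⟨σ * τ, fun i => δ i * ε (τ i), fun i => ?_, fun i => ?_, fun i => ?_⟩
  · rw [Equiv.Perm.mul_apply, h1, k1]
  · linear_combination (ε (τ i) * ε (τ i)) * k2 i + h2 (τ i)
  · rw [Units.val_mul, ← Matrix.mulVec_mulVec, k3, Matrix.mulVec_smul, h3, smul_smul]; rfl

theorem InT.pow4 {n : ℕ} {K : Type*} [Field K] {g : GL (Fin n) K} (hg : InT g) :
    g ^ 4 = 1 := by
  obtain ⟨σ, ε, h1, h2, h3⟩ := hg
  have hσ : ∀ i, σ (σ i) = i := by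
    intro i
    by_cases h : σ i = i
    · rw [h, h]
    have h' : σ (σ i) ≠ σ i := fun e => h (σ.injective e)
    have a1 := h1 i
    have a2 := h1 (σ i)
    ext
    have b1 : (σ i : ℕ) ≠ i := fun e => h (Fin.ext e)
    have b2 : (σ (σ i) : ℕ) ≠ σ i := fun e => h' (Fin.ext e)
    omega
  have hsq : ∀ i, ((g * g : GL (Fin n) K) : Matrix (Fin n) (Fin n) K) *ᵥ Pi.single i 1 =
      (ε i * ε (σ i)) • Pi.single i 1 := by
    intro i
    rw [Units.val_mul, ← Matrix.mulVec_mulVec, h3, Matrix.mulVec_smul, h3, smul_smul, hσ]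
  have h4 : g ^ 4 = (g * g) * (g * g) := by
    simp only [pow_succ, pow_zero, one_mul, mul_assoc]
  rw [h4]
  apply Units.ext
  refine Matrix.ext_of_mulVec_single fun i => ?_
  rw [Units.val_mul, ← Matrix.mulVec_mulVec, hsq, Matrix.mulVec_smul, hsq, smul_smul,
    Units.val_one, Matrix.one_mulVec]
  have : ε i * ε (σ i) * (ε i * ε (σ i)) = 1 := by
    linear_combination (ε (σ i) * ε (σ i)) * h2 i + h2 (σ i)
  rw [this, one_smul]

/-- The subgroup of `InT` elements. -/
def Tgrp (n : ℕ) (K : Type*) [Field K] : Subgroup (GL (Fin n) K) where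
  carrier := {g | InT g}
  one_mem' := ⟨1, fun _ => 1, by simp, by simp, fun i => by
    rw [Units.val_one, Matrix.one_mulVec]; simp⟩
  mul_mem' := fun ha hb => InT.mul ha hb
  inv_mem' := by
    intro g hg
    have h4 := InT.pow4 hg
    have : g⁻¹ = g * g * g := by
      rw [inv_eq_iff_mul_eq_one, ← h4]; simp only [pow_succ, pow_zero, one_mul, mul_assoc]
    change InT g⁻¹
    rw [this]
    exact (InT.mul (InT.mul hg hg) hg)

theorem exists_conj {n : ℕ} {K : Type*} [Field K] [Finite K]
    (Γ H : Subgroup (GL (Fin n) K))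
    (hidx : ¬ 2 ∣ H.relIndex Γ) :
    ∃ γ ∈ Γ, ∀ t ∈ Γ, InT t → γ⁻¹ * t * γ ∈ H := by
  let Q : Subgroup Γ := (Tgrp n K).subgroupOf Γ
  have hQ : IsPGroup 2 Q := by
    rintro ⟨⟨g, hg⟩, hgT⟩
    refine ⟨2, ?_⟩
    have : g ^ 4 = 1 := InT.pow4 hgT
    ext1; ext1
    simpa using this
  have : Fact (Nat.Prime 2) := ⟨Nat.prime_two⟩
  obtain ⟨c, hc⟩ := hQ.nonempty_fixed_point_of_prime_not_dvd_card (Γ ⧸ (H.subgroupOf Γ)) hidx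
  induction c using QuotientGroup.induction_on with
  | H γ =>
    refine ⟨γ, γ.2, fun t ht hT => ?_⟩
    have h1 := hc (⟨⟨t, ht⟩, hT⟩ : Q)
    have h2 : (((⟨t, ht⟩ : Γ) * γ : Γ) : Γ ⧸ (H.subgroupOf Γ)) = (γ : Γ ⧸ (H.subgroupOf Γ)) := h1
    rw [eq_comm, QuotientGroup.eq, Subgroup.mem_subgroupOf] at h2
    simpa [mul_assoc] using h2

theorem isRt_single {n : ℕ} {K : Type*} [Field K] (φ : K →+* K) (hφφ : ∀ x, φ (φ x) = x)
    (H : Subgroup (GL (Fin n) K)) (hT : ∀ t ∈ GUgrp n φ, InT t → t ∈ H) (i : Fin n) :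
    IsRt φ H (Pi.single i 1) := by
  have h1 : HB φ (Pi.single i 1) (Pi.single i (1 : K)) = 1 := by rw [HB_single]; simp
  obtain ⟨g, hg, hgx⟩ := exists_qrefl φ hφφ (Pi.single i (1 : K)) (-2) (by
    rw [h1]; simp only [map_neg, map_ofNat]; norm_num)
  refine ⟨by rw [h1]; exact one_ne_zero, g, hT g hg ?_, fun x => ?_⟩
  · refine ⟨1, fun j => if j = i then -1 else 1, by simp, fun j => by
      dsimp only; split_ifs <;> simp, fun j => ?_⟩
    rw [hgx, HB_single]
    by_cases h : j = i
    · subst h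
      funext k
      simp
      ring
    · have h' : i ≠ j := fun e => h e.symm
      simp [h, h']
  · rw [hgx, h1]
    funext k
    simp
    ring

theorem isRt_sub {n : ℕ} {K : Type*} [Field K] (hp2 : (2 : K) ≠ 0)
    (φ : K →+* K) (hφφ : ∀ x, φ (φ x) = x)
    (H : Subgroup (GL (Fin n) K)) (hT : ∀ t ∈ GUgrp n φ, InT t → t ∈ H) (i j : Fin n)
    (hij : i ≠ j) (hb : (i : ℕ) / 2 = (j : ℕ) / 2) :
    IsRt φ H (Pi.single i 1 - Pi.single j 1) := by
  have e0 : ∀ x, HB φ (Pi.single i (1 : K) - Pi.single j 1) x = x i - x j := by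
    intro x
    have : Pi.single i (1 : K) - Pi.single j 1 = Pi.single i (1 : K) + (-1 : K) • Pi.single j 1 := by
      simp [sub_eq_add_neg]
    rw [this, HB_add_smul_left, HB_single, HB_single]; simp [sub_eq_add_neg]
  have h1 : HB φ (Pi.single i (1 : K) - Pi.single j 1) (Pi.single i (1 : K) - Pi.single j 1) = 2 := by
    rw [e0]; simp [hij, hij.symm]; norm_num
  obtain ⟨g, hg, hgx⟩ := exists_qrefl φ hφφ (Pi.single i (1 : K) - Pi.single j 1) (-1) (by
    rw [h1]; simp; norm_num)
  refine ⟨by rw [h1]; exact hp2, g, hT g hg ?_, fun x => ?_⟩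
  · refine ⟨Equiv.swap i j, fun _ => 1, fun k => ?_, by simp, fun k => ?_⟩
    · by_cases hk : k = i
      · subst hk; rw [Equiv.swap_apply_left, hb]
      by_cases hk' : k = j
      · subst hk'; rw [Equiv.swap_apply_right, hb]
      · rw [Equiv.swap_apply_of_ne_of_ne hk hk']
    · rw [hgx, e0]
      by_cases hk : k = i
      · subst hk; rw [Equiv.swap_apply_left]; simp [hij, hij.symm]
      by_cases hk' : k = j
      · subst hk'; rw [Equiv.swap_apply_right]; simp [hij, hij.symm]
      · rw [Equiv.swap_apply_of_ne_of_ne hk hk']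
        have hk2 : i ≠ k := fun e => hk e.symm
        have hk3 : j ≠ k := fun e => hk' e.symm
        simp [hk2, hk3]
  · rw [hgx, h1, div_self hp2, one_mul, neg_one_mul, neg_smul, ← sub_eq_add_neg]

theorem root_support {n p : ℕ} {K : Type*} [Field K] [Finite K] [CharP K p] (hp2 : (2 : K) ≠ 0)
    (φ : K →+* K) (hφφ : ∀ x, φ (φ x) = x)
    (H : Subgroup (GL (Fin n) K)) (hT : ∀ t ∈ GUgrp n φ, InT t → t ∈ H)
    (hsolv : Group.IsSolvable H)
    (h3 : ¬ 3 ∣ Nat.card H) (hp : ¬ p ∣ Nat.card H) (a : Fin n → K) (ha : IsRt φ H a)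
    (k l : Fin n) (hk : a k ≠ 0) (hl : a l ≠ 0) : (k : ℕ) / 2 = (l : ℕ) / 2 := by
  by_contra hne
  wlog hlt : (k : ℕ) < l generalizing k l
  · refine this l k hl hk (fun h => hne h.symm) ?_
    have : (k : ℕ) ≠ l := fun e => hne (by rw [e])
    omega
  have hkl : k ≠ l := fun e => hne (by rw [e])
  by_cases hm : ∃ m, m ≠ k ∧ m ≠ l ∧ a m ≠ 0
  · obtain ⟨m, hmk, hml, ham⟩ := hm
    refine no_triple (p := p) hp2 φ hφφ H hsolv h3 hp (Pi.single k 1) a (Pi.single l 1)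
      (isRt_single φ hφφ H hT k) ha (isRt_single φ hφφ H hT l) ?_ ?_ ?_ ?_
    · rw [HB_single]; simp [hkl]
    · rwa [HB_single]
    · rwa [HB_single]
    · rw [Fintype.linearIndependent_iff]
      intro g hg
      rw [Fin.sum_univ_three] at hg
      have g1 : g 1 = 0 := by
        have := congrFun hg m
        simpa [hmk, hml, ham] using this
      have g0 : g 0 = 0 := by
        have := congrFun hg k
        simpa [hkl, g1] using this
      have g2 : g 2 = 0 := by
        have := congrFun hg l
        simpa [hkl.symm, g1] using this
      intro i; fin_cases i <;> assumption
  · push Not at hm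
    have hk' : ∃ k' : Fin n, k' ≠ k ∧ (k' : ℕ) / 2 = (k : ℕ) / 2 := by
      by_cases he : (k : ℕ) % 2 = 0
      · refine ⟨⟨k + 1, by omega⟩, fun e => ?_, ?_⟩
        · have := congrArg Fin.val e; simp at this
        · simp; omega
      · refine ⟨⟨k - 1, by omega⟩, fun e => ?_, ?_⟩
        · have := congrArg Fin.val e; simp at this; omega
        · simp; omega
    obtain ⟨k', hk'k, hk'2⟩ := hk'
    have hk'l : k' ≠ l := by rintro rfl; exact hne hk'2.symm
    have hak' : a k' = 0 := hm k' hk'k hk'l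
    have hsub := isRt_sub hp2 φ hφφ H hT k k' hk'k.symm hk'2.symm
    have e0 : ∀ x, HB φ (Pi.single k (1 : K) - Pi.single k' 1) x = x k - x k' := by
      intro x
      have : Pi.single k (1 : K) - Pi.single k' 1 =
          Pi.single k (1 : K) + (-1 : K) • Pi.single k' 1 := by
        simp [sub_eq_add_neg]
      rw [this, HB_add_smul_left, HB_single, HB_single]; simp [sub_eq_add_neg]
    refine no_triple (p := p) hp2 φ hφφ H hsolv h3 hp (Pi.single l 1) a
      (Pi.single k 1 - Pi.single k' 1)
      (isRt_single φ hφφ H hT l) ha hsub ?_ ?_ ?_ ?_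
    · rw [HB_single]; simp [hkl.symm, hk'l.symm]
    · rwa [HB_single]
    · rw [e0, hak', sub_zero]; exact hk
    · rw [Fintype.linearIndependent_iff]
      intro g hg
      rw [Fin.sum_univ_three] at hg
      have g2 : g 2 = 0 := by
        have := congrFun hg k'
        simpa [hk'l, hk'k, hak'] using this
      have g1 : g 1 = 0 := by
        have := congrFun hg k
        simpa [hkl, g2, hk] using this
      have g0 : g 0 = 0 := by
        have := congrFun hg l
        simpa [g1, g2] using this
      intro i; fin_cases i <;> assumption

/-- The matrix permutes the blocks of consecutive pairs. -/
def BP {n : ℕ} {K : Type*} [Field K] (g : Matrix (Fin n) (Fin n) K) : Prop :=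
  ∀ k k' j j' : Fin n, (j : ℕ) / 2 = (j' : ℕ) / 2 → g k j ≠ 0 → g k' j' ≠ 0 →
    (k : ℕ) / 2 = (k' : ℕ) / 2

theorem block_perm {n p : ℕ} {K : Type*} [Field K] [Finite K] [CharP K p] (hp2 : (2 : K) ≠ 0)
    (φ : K →+* K) (hφφ : ∀ x, φ (φ x) = x)
    (H : Subgroup (GL (Fin n) K)) (hHU : H ≤ GUgrp n φ) (hT : ∀ t ∈ GUgrp n φ, InT t → t ∈ H)
    (hsolv : Group.IsSolvable H)
    (h3 : ¬ 3 ∣ Nat.card H) (hp : ¬ p ∣ Nat.card H) (g : GL (Fin n) K) (hg : g ∈ H) :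
    BP (g : Matrix (Fin n) (Fin n) K) := by
  intro k k' j j' hjj hk hk'
  have hcol : ∀ j, (g : Matrix (Fin n) (Fin n) K) *ᵥ Pi.single j 1 =
      fun k => (g : Matrix (Fin n) (Fin n) K) k j := by
    intro j; rw [Matrix.mulVec_single_one]; rfl
  have hsingle : ∀ j k k', (g : Matrix (Fin n) (Fin n) K) k j ≠ 0 →
      (g : Matrix (Fin n) (Fin n) K) k' j ≠ 0 → (k : ℕ) / 2 = (k' : ℕ) / 2 := by
    intro j k k' hk hk'
    have h1 := IsRt.conj hHU (isRt_single φ hφφ H hT j) hg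
    rw [hcol] at h1
    exact root_support (p := p) hp2 φ hφφ H hT hsolv h3 hp _ h1 k k' hk hk'
  by_cases hj : j = j'
  · subst hj; exact hsingle j k k' hk hk'
  by_contra hne
  have h1 := IsRt.conj hHU (isRt_sub hp2 φ hφφ H hT j j' hj hjj) hg
  rw [Matrix.mulVec_sub, hcol, hcol] at h1
  have e1 : (g : Matrix (Fin n) (Fin n) K) k j' = 0 := by
    by_contra h; exact hne (hsingle j' k k' h hk')
  have e2 : (g : Matrix (Fin n) (Fin n) K) k' j = 0 := by
    by_contra h; exact hne (hsingle j k k' hk h)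
  refine hne (root_support (p := p) hp2 φ hφφ H hT hsolv h3 hp _ h1 k k' ?_ ?_)
  · simpa [e1] using hk
  · simpa [e2] using hk'


theorem exists_y {n : ℕ} {K : Type*} [Field K] (hn : 3 ≤ n) (φ : K →+* K)
    (hφφ : ∀ x, φ (φ x) = x) (ζ t0 : K) (hζ : ζ * φ ζ = 1) (hζ2 : ζ * ζ ≠ 1)
    (ht0 : t0 ≠ 0) (ht1 : φ t0 * t0 ≠ 1) (i j : Fin n) (hij : i ≠ j) :
    ∃ y ∈ GUgrp n φ, ∃ u : Fin n → K, u i = 0 ∧ (∀ k, k ≠ i → u k ≠ 0) ∧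
      (y : Matrix (Fin n) (Fin n) K) *ᵥ Pi.single i 1 = Pi.single i 1 ∧
      (y : Matrix (Fin n) (Fin n) K) *ᵥ Pi.single j 1 = u ∧
      ∀ x, ((y : Matrix (Fin n) (Fin n) K) *ᵥ x) i = x i := by
  obtain ⟨k, hki, hkj⟩ : ∃ k, k ≠ i ∧ k ≠ j := by
    by_contra h
    push Not at h
    have h1 : (Finset.univ : Finset (Fin n)) ⊆ {i, j} := by
      intro k _
      by_cases hk : k = i
      · simp [hk]
      · simp [h k hk]
    have h2 := Finset.card_le_card h1
    have h3 := Finset.card_le_two (a := i) (b := j)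
    simp at h2
    omega
  let b : Fin n → K := fun m => if m = i ∨ m = k then 0 else 1
  have hbk : b k = 0 := by simp [b]
  have hN : ∀ t, HB φ (b + t • Pi.single k 1) (b + t • Pi.single k 1) = HB φ b b + φ t * t := by
    intro t
    rw [HB_add_smul_left, map_add, map_add, map_smul, map_smul, HB_single, HB_single,
      ← HB_conj φ hφφ (Pi.single k 1) b, HB_single, hbk]
    simp
  obtain ⟨t, htne, htN⟩ : ∃ t, t ≠ 0 ∧ HB φ b b + φ t * t ≠ 0 := by
    by_cases h : HB φ b b + φ 1 * 1 = 0
    · refine ⟨t0, ht0, fun h' => ht1 ?_⟩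
      rw [map_one] at h
      linear_combination h' - h
    · exact ⟨1, one_ne_zero, h⟩
  rw [← hN] at htN
  set a : Fin n → K := b + t • Pi.single k 1 with ha
  have hai : a i = 0 := by simp [ha, b, hki.symm]
  have haj : a j = 1 := by simp [ha, b, hij.symm, hkj.symm]
  have ham : ∀ m, m ≠ i → a m ≠ 0 := by
    intro m hm
    by_cases hmk : m = k
    · subst hmk; simp [ha, b, htne]
    · simp [ha, b, hm, hmk]
  have hNφ := HB_conj φ hφφ a a
  have hz1 : ζ ≠ 1 := by rintro rfl; simp at hζ2
  have hl0 : (ζ - 1) / HB φ a a ≠ 0 := div_ne_zero (sub_ne_zero.2 hz1) htN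
  obtain ⟨y, hy, hyx⟩ := exists_qrefl φ hφφ a ((ζ - 1) / HB φ a a) (by
    rw [map_div₀, hNφ, map_sub, map_one]
    field_simp
    linear_combination hζ)
  have hBi : HB φ a (Pi.single i 1) = 0 := by
    rw [← HB_conj φ hφφ, HB_single, hai, map_zero]
  have hBj : HB φ a (Pi.single j 1) = 1 := by
    rw [← HB_conj φ hφφ, HB_single, haj, map_one]
  refine ⟨y, hy, _, ?_, ?_, ?_, rfl, ?_⟩
  · rw [hyx]; simp [hai, hij]
  · intro m hm
    rw [hyx, hBj]
    by_cases hmj : m = j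
    · subst hmj
      simp only [Pi.add_apply, Pi.smul_apply, Pi.single_eq_same, haj, smul_eq_mul, mul_one]
      intro h
      have h1 : ζ = 1 - HB φ a a := by
        field_simp at h
        linear_combination h
      have h2 : φ ζ = ζ := by rw [h1, map_sub, map_one, hNφ]
      rw [h2] at hζ
      exact hζ2 hζ
    · simpa [hmj] using ⟨⟨sub_ne_zero.2 hz1, htN⟩, ham m hm⟩
  · rw [hyx, hBi]; simp
  · intro x; rw [hyx]; simp [hai]

theorem core_y {n : ℕ} {K : Type*} [Field K] (hn : 3 ≤ n) (g y : GL (Fin n) K)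
    (σ : Fin n → Fin n) (hσ : ∀ j k, (g : Matrix (Fin n) (Fin n) K) k j ≠ 0 ↔ k = σ j)
    (hsurj : Function.Surjective σ)
    (hy : BP ((y⁻¹ * g * y : GL (Fin n) K) : Matrix (Fin n) (Fin n) K)) (i j : Fin n) (hij : i ≠ j)
    (hi : (i : ℕ) / 2 = 0) (hj : (j : ℕ) / 2 = 0) (u : Fin n → K) (hui : u i = 0)
    (hu : ∀ k, k ≠ i → u k ≠ 0)
    (hyi : (y : Matrix (Fin n) (Fin n) K) *ᵥ Pi.single i 1 = Pi.single i 1)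
    (hyj : (y : Matrix (Fin n) (Fin n) K) *ᵥ Pi.single j 1 = u)
    (hyr : ∀ x, ((y : Matrix (Fin n) (Fin n) K) *ᵥ x) i = x i) :
    σ i = i ∧ ∃ b : K, ∀ k, k ≠ i → ((g : Matrix (Fin n) (Fin n) K) *ᵥ u) k = b * u k := by
  set h : GL (Fin n) K := y⁻¹ * g * y with hh
  have hyh : ∀ x, (y : Matrix (Fin n) (Fin n) K) *ᵥ ((h : Matrix (Fin n) (Fin n) K) *ᵥ x) =
      (g : Matrix (Fin n) (Fin n) K) *ᵥ ((y : Matrix (Fin n) (Fin n) K) *ᵥ x) := by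
    intro x
    rw [Matrix.mulVec_mulVec, Matrix.mulVec_mulVec, ← Units.val_mul, ← Units.val_mul, hh]
    congr 2
    group
  have hcol : ∀ (m : GL (Fin n) K) (j k : Fin n), ((m : Matrix (Fin n) (Fin n) K) *ᵥ Pi.single j 1) k =
      (m : Matrix (Fin n) (Fin n) K) k j := by
    intro m j k; rw [Matrix.mulVec_single_one]; rfl
  have h1 := hyh (Pi.single i 1)
  have h2 := hyh (Pi.single j 1)
  rw [hyi] at h1
  rw [hyj] at h2
  by_cases hβ : ∀ k : Fin n, ((k : ℕ) / 2 ≠ 0) → (h : Matrix (Fin n) (Fin n) K) k i = 0 ∧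
      (h : Matrix (Fin n) (Fin n) K) k j = 0
  · -- block zero
    have hspan : ∀ s, s = i ∨ s = j → ∃ a b : K,
        (h : Matrix (Fin n) (Fin n) K) *ᵥ Pi.single s 1 = a • Pi.single i 1 + b • Pi.single j 1 := by
      intro s hs
      refine ⟨(h : Matrix (Fin n) (Fin n) K) i s, (h : Matrix (Fin n) (Fin n) K) j s, ?_⟩
      funext k
      rw [hcol]
      by_cases hki : k = i
      · subst hki; simp [hij]
      by_cases hkj : k = j
      · subst hkj; simp [hij.symm]
      have : (k : ℕ) / 2 ≠ 0 := by
        have a1 : (k : ℕ) ≠ i := fun e => hki (Fin.ext e)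
        have a2 : (k : ℕ) ≠ j := fun e => hkj (Fin.ext e)
        have a3 : (i : ℕ) ≠ j := fun e => hij (Fin.ext e)
        omega
      have h0 : (h : Matrix (Fin n) (Fin n) K) k s = 0 := by
        rcases hs with rfl | rfl
        · exact (hβ k this).1
        · exact (hβ k this).2
      simp [h0, hki, hkj]
    obtain ⟨a, b, hab⟩ := hspan i (Or.inl rfl)
    obtain ⟨a', b', hab'⟩ := hspan j (Or.inr rfl)
    rw [hab, Matrix.mulVec_add, Matrix.mulVec_smul, Matrix.mulVec_smul, hyi, hyj] at h1
    rw [hab', Matrix.mulVec_add, Matrix.mulVec_smul, Matrix.mulVec_smul, hyi, hyj] at h2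
    have hgi : ∀ k, k ≠ i → (g : Matrix (Fin n) (Fin n) K) k i = b * u k := by
      intro k hk
      rw [← hcol, ← h1]; simp [hk]
    have hb : b = 0 := by
      by_contra hb
      obtain ⟨k, hki, hkj⟩ : ∃ k, k ≠ i ∧ k ≠ j := by
        refine ⟨⟨2, hn⟩, fun e => ?_, fun e => ?_⟩
        · rw [← e] at hi; simp at hi
        · rw [← e] at hj; simp at hj
      have e1 := (hσ i k).1 (by rw [hgi k hki]; exact mul_ne_zero hb (hu k hki))
      have e2 := (hσ i j).1 (by rw [hgi j hij.symm]; exact mul_ne_zero hb (hu j hij.symm))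
      exact hkj (e1.trans e2.symm)
    refine ⟨?_, b', fun k hk => ?_⟩
    · by_contra hne
      have := (hσ i (σ i)).2 rfl
      rw [hgi _ hne, hb, zero_mul] at this
      exact this rfl
    · rw [← h2]; simp [hk]
  · exfalso
    push Not at hβ
    obtain ⟨k, hk0, hk⟩ := hβ
    have hz : (h : Matrix (Fin n) (Fin n) K) i i = 0 ∧ (h : Matrix (Fin n) (Fin n) K) i j = 0 := by
      have key : ∀ s s' : Fin n, (s : ℕ) / 2 = 0 → (s' : ℕ) / 2 = 0 →
          (h : Matrix (Fin n) (Fin n) K) k s ≠ 0 → (h : Matrix (Fin n) (Fin n) K) i s' = 0 := by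
        intro s s' hs hs' hks
        by_contra hne
        have := hy k i s s' (by rw [hs, hs']) hks hne
        omega
      by_cases hki : (h : Matrix (Fin n) (Fin n) K) k i = 0
      · exact ⟨key j i hj hi (hk hki), key j j hj hj (hk hki)⟩
      · exact ⟨key i i hi hi hki, key i j hi hj hki⟩
    have e1 : (g : Matrix (Fin n) (Fin n) K) i i = 0 := by
      rw [← hcol, ← h1, hyr, hcol, hz.1]
    have e2 : ((g : Matrix (Fin n) (Fin n) K) *ᵥ u) i = 0 := by
      rw [← h2, hyr, hcol, hz.2]
    obtain ⟨m, hm⟩ := hsurj i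
    have hgim : (g : Matrix (Fin n) (Fin n) K) i m ≠ 0 := (hσ m i).2 hm.symm
    have hgi0 : ∀ m', m' ≠ m → (g : Matrix (Fin n) (Fin n) K) i m' = 0 := by
      intro m' hm'
      by_contra hne
      have hinj : Function.Injective σ := Finite.injective_iff_surjective.2 hsurj
      exact hm' (hinj ((((hσ m' i).1 hne).symm).trans hm.symm))
    have e3 : ((g : Matrix (Fin n) (Fin n) K) *ᵥ u) i = (g : Matrix (Fin n) (Fin n) K) i m * u m := by
      rw [Matrix.mulVec, dotProduct, Finset.sum_eq_single m]
      · intro m' _ hm'; rw [hgi0 m' hm', zero_mul]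
      · simp
    rw [e3] at e2
    have hum : u m = 0 := (mul_eq_zero.1 e2).resolve_left hgim
    have hmi : m = i := by
      by_contra hne; exact hu m hne hum
    rw [hmi] at hgim
    exact hgim e1

theorem core {n : ℕ} {K : Type*} [Field K] (hn : 3 ≤ n) (g y y' : GL (Fin n) K)
    (c : Equiv.Perm (Fin n)) (hc : ∀ i, (c i : ℕ) = if (i : ℕ) + 1 = n then 0 else (i : ℕ) + 1)
    (h0 : BP (g : Matrix (Fin n) (Fin n) K))
    (hw : ∀ k k' j j' : Fin n, (j : ℕ) / 2 = (j' : ℕ) / 2 →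
      (g : Matrix (Fin n) (Fin n) K) (c k) (c j) ≠ 0 →
      (g : Matrix (Fin n) (Fin n) K) (c k') (c j') ≠ 0 → (k : ℕ) / 2 = (k' : ℕ) / 2)
    (i j : Fin n) (hi : (i : ℕ) = 0) (hj : (j : ℕ) = 1)
    (hy : BP ((y⁻¹ * g * y : GL (Fin n) K) : Matrix (Fin n) (Fin n) K))
    (u : Fin n → K) (hui : u i = 0)
    (hu : ∀ k, k ≠ i → u k ≠ 0)
    (hyi : (y : Matrix (Fin n) (Fin n) K) *ᵥ Pi.single i 1 = Pi.single i 1)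
    (hyj : (y : Matrix (Fin n) (Fin n) K) *ᵥ Pi.single j 1 = u)
    (hyr : ∀ x, ((y : Matrix (Fin n) (Fin n) K) *ᵥ x) i = x i)
    (hy' : BP ((y'⁻¹ * g * y' : GL (Fin n) K) : Matrix (Fin n) (Fin n) K))
    (u' : Fin n → K) (hui' : u' j = 0)
    (hu' : ∀ k, k ≠ j → u' k ≠ 0)
    (hyj' : (y' : Matrix (Fin n) (Fin n) K) *ᵥ Pi.single j 1 = Pi.single j 1)
    (hyi' : (y' : Matrix (Fin n) (Fin n) K) *ᵥ Pi.single i 1 = u')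
    (hyr' : ∀ x, ((y' : Matrix (Fin n) (Fin n) K) *ᵥ x) j = x j) :
    ∃ a : K, (g : Matrix (Fin n) (Fin n) K) = a • (1 : Matrix (Fin n) (Fin n) K) := by
  have hcn : ∀ k : Fin n, ((k : ℕ) + 1 = n ∧ (c k : ℕ) = 0) ∨
      ((k : ℕ) + 1 < n ∧ (c k : ℕ) = k + 1) := by
    intro k
    have := hc k
    split_ifs at this with h
    · exact Or.inl ⟨h, this⟩
    · right
      exact ⟨by have := k.2; omega, this⟩
  have huniq : ∀ j k k', (g : Matrix (Fin n) (Fin n) K) k j ≠ 0 →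
      (g : Matrix (Fin n) (Fin n) K) k' j ≠ 0 → k = k' := by
    intro j k k' hk hk'
    have e1 := h0 k k' j j rfl hk hk'
    obtain ⟨j, rfl⟩ := c.surjective j
    obtain ⟨k, rfl⟩ := c.surjective k
    obtain ⟨k', rfl⟩ := c.surjective k'
    have e2 := hw k k' j j rfl hk hk'
    ext
    have a1 := hcn k
    have a2 := hcn k'
    omega
  have hcolne : ∀ j, ∃ k, (g : Matrix (Fin n) (Fin n) K) k j ≠ 0 := by
    intro j
    by_contra h
    push Not at h
    have h1 := congrFun (congrFun g.inv_mul j) j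
    rw [Matrix.mul_apply, Matrix.one_apply_eq] at h1
    simp [h] at h1
  have hrowne : ∀ k, ∃ j, (g : Matrix (Fin n) (Fin n) K) k j ≠ 0 := by
    intro j
    by_contra h
    push Not at h
    have h1 := congrFun (congrFun g.mul_inv j) j
    rw [Matrix.mul_apply, Matrix.one_apply_eq] at h1
    simp [h] at h1
  choose σ hσ0 using hcolne
  have hσ : ∀ j k, (g : Matrix (Fin n) (Fin n) K) k j ≠ 0 ↔ k = σ j := by
    intro j k
    refine ⟨fun h => huniq j k _ h (hσ0 j), ?_⟩
    rintro rfl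
    exact hσ0 j
  have hsurj : Function.Surjective σ := by
    intro k
    obtain ⟨j, hj⟩ := hrowne k
    exact ⟨j, ((hσ j k).1 hj).symm⟩
  have hinj : Function.Injective σ := Finite.injective_iff_surjective.2 hsurj
  have hij : i ≠ j := fun e => by rw [e] at hi; omega
  obtain ⟨hσi, b, hb⟩ := core_y hn g y σ hσ hsurj hy i j hij (by omega) (by omega) u hui hu
    hyi hyj hyr
  obtain ⟨hσj, b', hb'⟩ := core_y hn g y' σ hσ hsurj hy' j i hij.symm (by omega) (by omega) u' hui'
    hu' hyj' hyi' hyr'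
  have hid : ∀ m (hm : m < n), σ ⟨m, hm⟩ = ⟨m, hm⟩ := by
    intro m
    induction m with
    | zero =>
      intro hm
      have : (⟨0, hm⟩ : Fin n) = i := Fin.ext hi.symm
      rw [this, hσi]
    | succ m ih =>
      intro hm
      have hm' : m < n := by omega
      have ih := ih hm'
      have hne : σ ⟨m + 1, hm⟩ ≠ ⟨m, hm'⟩ := by
        intro e
        rw [← ih] at e
        have := congrArg Fin.val (hinj e)
        simp at this
      have hne' : (σ ⟨m + 1, hm⟩ : ℕ) ≠ m := fun e => hne (Fin.ext e)
      by_cases hev : m % 2 = 0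
      · have e := h0 (σ ⟨m + 1, hm⟩) (σ ⟨m, hm'⟩) ⟨m + 1, hm⟩ ⟨m, hm'⟩
          (by simp; omega) (hσ0 _) (hσ0 _)
        rw [ih] at e
        ext
        simp only at e ⊢
        omega
      · obtain ⟨k, hk⟩ := c.surjective (σ ⟨m + 1, hm⟩)
        have hcm : c ⟨m, hm'⟩ = ⟨m + 1, hm⟩ := by
          ext
          have := hcn ⟨m, hm'⟩
          simp only at this ⊢
          omega
        have hcm' : c ⟨m - 1, by omega⟩ = ⟨m, hm'⟩ := by
          ext
          have := hcn ⟨m - 1, by omega⟩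
          simp only at this ⊢
          omega
        have e := hw k ⟨m - 1, by omega⟩ ⟨m, hm'⟩ ⟨m - 1, by omega⟩ (by simp only; omega)
          (by rw [hk, hcm]; exact hσ0 _)
          (by rw [hcm', hσ, ih])
        rw [← hk] at hne' ⊢
        ext
        have := hcn k
        simp only at e ⊢
        omega
  have hid' : ∀ k, σ k = k := fun k => hid k k.2
  have hoff : ∀ k m, k ≠ m → (g : Matrix (Fin n) (Fin n) K) k m = 0 := by
    intro k m hkm
    by_contra hne
    exact hkm (((hσ m k).1 hne).trans (hid' m))
  have hmul : ∀ (v : Fin n → K) k, ((g : Matrix (Fin n) (Fin n) K) *ᵥ v) k =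
      (g : Matrix (Fin n) (Fin n) K) k k * v k := by
    intro v k
    rw [Matrix.mulVec, dotProduct, Finset.sum_eq_single k]
    · intro m' _ hm'; rw [hoff k m' hm'.symm, zero_mul]
    · simp
  have hd : ∀ k, k ≠ i → (g : Matrix (Fin n) (Fin n) K) k k = b := by
    intro k hk
    have := hb k hk
    rw [hmul] at this
    exact mul_right_cancel₀ (hu k hk) this
  have hd' : ∀ k, k ≠ j → (g : Matrix (Fin n) (Fin n) K) k k = b' := by
    intro k hk
    have := hb' k hk
    rw [hmul] at this
    exact mul_right_cancel₀ (hu' k hk) this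
  have hbb : b = b' := by
    rw [← hd ⟨2, hn⟩ (fun e => by rw [← e] at hi; simp at hi),
      hd' ⟨2, hn⟩ (fun e => by rw [← e] at hj; simp at hj)]
  refine ⟨b, ?_⟩
  ext k m
  rw [Matrix.smul_apply, Matrix.one_apply]
  split_ifs with hkm
  · subst hkm
    rw [smul_eq_mul, mul_one]
    by_cases hk : k = i
    · rw [hd' k (hk ▸ hij), hbb]
    · exact hd k hk
  · rw [hoff k m hkm, smul_zero]

theorem exists_sl {n : ℕ} {K : Type*} [Field K] (hn : 3 ≤ n) (φ : K →+* K)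
    (s : GL (Fin n) K) (hs : s ∈ GUgrp n φ) :
    ∃ s' ∈ GUgrp n φ ⊓ SLsub n K, ∀ g : GL (Fin n) K,
      BP ((s'⁻¹ * g * s' : GL (Fin n) K) : Matrix (Fin n) (Fin n) K) →
      BP ((s⁻¹ * g * s : GL (Fin n) K) : Matrix (Fin n) (Fin n) K) := by
  have hs' : ((s : Matrix (Fin n) (Fin n) K).map φ)ᵀ * (s : Matrix (Fin n) (Fin n) K) = 1 := hs
  have hdet : φ (Matrix.det (s : Matrix (Fin n) (Fin n) K)) *
      Matrix.det (s : Matrix (Fin n) (Fin n) K) = 1 := by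
    have := congrArg Matrix.det hs'
    rw [Matrix.det_mul, Matrix.det_transpose, Matrix.det_one] at this
    rw [← this, RingHom.map_det]
    rfl
  set D := Matrix.det (s : Matrix (Fin n) (Fin n) K)
  have hD0 : D ≠ 0 := right_ne_zero_of_mul_eq_one hdet
  let i0 : Fin n := ⟨0, by omega⟩
  let v : Fin n → K := fun k => if k = i0 then D⁻¹ else 1
  have hv : ∀ k, v k ≠ 0 := by
    intro k; dsimp only [v]; split_ifs
    · exact inv_ne_zero hD0
    · exact one_ne_zero
  have hφv : ∀ k, φ (v k) * v k = 1 := by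
    intro k; dsimp only [v]; split_ifs
    · rw [map_inv₀, ← mul_inv, hdet, inv_one]
    · simp
  have hdd : ((Matrix.diagonal v).map φ)ᵀ * Matrix.diagonal v = 1 := by
    rw [Matrix.diagonal_map (map_zero φ), Matrix.diagonal_transpose, Matrix.diagonal_mul_diagonal]
    simp [hφv]
  let d : GL (Fin n) K := ⟨Matrix.diagonal v, ((Matrix.diagonal v).map φ)ᵀ,
    mul_eq_one_comm.1 hdd, hdd⟩
  have hd : d ∈ GUgrp n φ := hdd
  refine ⟨s * d, ⟨(GUgrp n φ).mul_mem hs hd, ?_⟩, ?_⟩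
  · change Matrix.det ((s * d : GL (Fin n) K) : Matrix (Fin n) (Fin n) K) = 1
    rw [Units.val_mul, Matrix.det_mul]
    change D * Matrix.det (Matrix.diagonal v) = 1
    rw [Matrix.det_diagonal]
    simp only [v, Finset.prod_ite_eq', Finset.mem_univ, if_true]
    exact mul_inv_cancel₀ hD0
  · intro g hB
    have e : d * ((s * d)⁻¹ * g * (s * d)) = (s⁻¹ * g * s) * d := by group
    have e' : Matrix.diagonal v *
        (((s * d)⁻¹ * g * (s * d) : GL (Fin n) K) : Matrix (Fin n) (Fin n) K) =
        ((s⁻¹ * g * s : GL (Fin n) K) : Matrix (Fin n) (Fin n) K) * Matrix.diagonal v := by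
      have := congrArg Units.val e
      rwa [Units.val_mul, Units.val_mul _ d] at this
    have key : ∀ k j, ((s⁻¹ * g * s : GL (Fin n) K) : Matrix (Fin n) (Fin n) K) k j ≠ 0 →
        (((s * d)⁻¹ * g * (s * d) : GL (Fin n) K) : Matrix (Fin n) (Fin n) K) k j ≠ 0 := by
      intro k j h h'
      have := congrFun (congrFun e' k) j
      rw [Matrix.diagonal_mul, Matrix.mul_diagonal, h', mul_zero] at this
      exact mul_ne_zero h (hv j) this.symm
    intro k k' j j' hjj hk hk'
    exact hB k k' j j' hjj (key _ _ hk) (key _ _ hk')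

theorem exists_w {n : ℕ} {K : Type*} [Field K] (φ : K →+* K) (c : Equiv.Perm (Fin n)) :
    ∃ w ∈ GUgrp n φ, ∀ (g : GL (Fin n) K) k j,
      ((w⁻¹ * g * w : GL (Fin n) K) : Matrix (Fin n) (Fin n) K) k j =
        (g : Matrix (Fin n) (Fin n) K) (c k) (c j) := by
  let M : Matrix (Fin n) (Fin n) K := Matrix.of fun k j => if k = c j then 1 else 0
  have hM : (M.map φ)ᵀ * M = 1 := by
    ext i j
    rw [Matrix.mul_apply, Matrix.one_apply, Finset.sum_eq_single (c j)]
    · simp [M, c.injective.eq_iff, eq_comm]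
    · intro b _ hb; simp [M, hb]
    · simp
  let w : GL (Fin n) K := ⟨M, (M.map φ)ᵀ, mul_eq_one_comm.1 hM, hM⟩
  refine ⟨w, hM, fun g k j => ?_⟩
  have e : w * (w⁻¹ * g * w) = g * w := by group
  have e' : M * ((w⁻¹ * g * w : GL (Fin n) K) : Matrix (Fin n) (Fin n) K) =
      (g : Matrix (Fin n) (Fin n) K) * M := congrArg Units.val e
  have := congrFun (congrFun e' (c k)) j
  rw [Matrix.mul_apply, Matrix.mul_apply, Finset.sum_eq_single k, Finset.sum_eq_single (c j)] at this
  · simpa [M] using this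
  · intro b _ hb; simp [M, hb]
  · simp
  · intro b _ hb; simp [M, c.injective.eq_iff, Ne.symm hb]
  · simp

theorem exists_scalars {p f q : ℕ} (hp : p.Prime) (hp2 : p ≠ 2) (hf : 1 ≤ f) (hq : q = p ^ f)
    (K : Type*) [Field K] [Fintype K] (hcard : Fintype.card K = q ^ 2)
    (φ : K →+* K) (hφ : ∀ x : K, φ x = x ^ q) :
    ∃ ζ t0 : K, ζ * φ ζ = 1 ∧ ζ * ζ ≠ 1 ∧ t0 ≠ 0 ∧ φ t0 * t0 ≠ 1 := by
  have hq3 : 3 ≤ q := by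
    have h1 := hp.two_le
    have h2 : p ^ 1 ≤ p ^ f := Nat.pow_le_pow_right (by omega) hf
    rw [pow_one] at h2
    omega
  obtain ⟨r, rfl⟩ : ∃ r, q = r + 1 := ⟨q - 1, by omega⟩
  obtain ⟨g, hg⟩ := IsCyclic.exists_generator (α := Kˣ)
  have hord : orderOf g = r * (r + 2) := by
    rw [orderOf_eq_card_of_forall_mem_zpowers hg, Nat.card_units, Nat.card_eq_fintype_card, hcard]
    have : (r + 1) ^ 2 = r * (r + 2) + 1 := by ring
    omega
  have hpow : ∀ m, 0 < m → m < r * (r + 2) → (g : K) ^ m ≠ 1 := by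
    intro m hm0 hm h
    have h1 : g ^ m = 1 := by ext; simpa using h
    have := Nat.le_of_dvd hm0 (orderOf_dvd_of_pow_eq_one h1)
    omega
  refine ⟨(g : K) ^ r, g, ?_, ?_, g.ne_zero, ?_⟩
  · rw [hφ, ← pow_mul, ← pow_add]
    have h1 : g ^ (r * (r + 2)) = 1 := by rw [← hord]; exact pow_orderOf_eq_one g
    have : r + r * (r + 1) = r * (r + 2) := by ring
    rw [this]
    simpa using congrArg Units.val h1
  · rw [← pow_add]
    exact hpow _ (by omega) (by nlinarith)
  · rw [hφ, ← pow_succ]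
    exact hpow _ (by omega) (by nlinarith)

theorem stmt6 (p f q n : ℕ) (hp : p.Prime) (hf : 1 ≤ f) (hq : q = p ^ f)
    (K : Type) [Field K] [Fintype K] (hcard : Fintype.card K = q ^ 2)
    (φ : K →+* K) (hφ : ∀ x : K, φ x = x ^ q)
    (hn : 3 ≤ n) (hnonsolv : ¬ IsSolvable ↥(GUgrp n φ))
    (π : Set ℕ) (hπ : ∀ r ∈ π, r.Prime) (h2pi : 2 ∈ π) (h3pi : 3 ∉ π) (hppi : p ∉ π)
    (H : Subgroup (GL (Fin n) K)) (hH : IsHallSubgroupIn π (GUgrp n φ) H)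
    (hsolv : IsSolvable ↥H)
    :
    ∃ x y z : GL (Fin n) K,
      x ∈ (H : Set (GL (Fin n) K)) * ((GUgrp n φ ⊓ SLsub n K : Subgroup (GL (Fin n) K)) : Set (GL (Fin n) K)) ∧
      y ∈ (H : Set (GL (Fin n) K)) * ((GUgrp n φ ⊓ SLsub n K : Subgroup (GL (Fin n) K)) : Set (GL (Fin n) K)) ∧
      z ∈ (H : Set (GL (Fin n) K)) * ((GUgrp n φ ⊓ SLsub n K : Subgroup (GL (Fin n) K)) : Set (GL (Fin n) K)) ∧
    ∀ g ∈ H ⊓ conjBy H x ⊓ conjBy H y ⊓ conjBy H z,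
      ∃ c : K, (g : Matrix (Fin n) (Fin n) K) = c • (1 : Matrix (Fin n) (Fin n) K) := by
  have hsol : Group.IsSolvable H := hsolv
  obtain ⟨hHU, hHπ, hHi⟩ := hH
  have hpne2 : p ≠ 2 := by rintro rfl; exact hppi h2pi
  have h3 : ¬ 3 ∣ Nat.card H := fun h => h3pi (hHπ 3 Nat.prime_three h)
  have hpc : ¬ p ∣ Nat.card H := fun h => hppi (hHπ p hp h)
  have hpF : Fact p.Prime := ⟨hp⟩
  have hchar : CharP K p := by
    refine charP_of_card_eq_prime_pow (f := f * 2) ?_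
    rw [hcard, hq, pow_mul]
  have h2K : (2 : K) ≠ 0 := by
    intro h
    have h' : ((2 : ℕ) : K) = 0 := by exact_mod_cast h
    rw [CharP.cast_eq_zero_iff K p] at h'
    exact hpne2 ((Nat.prime_dvd_prime_iff_eq hp Nat.prime_two).1 h')
  have hφφ : ∀ x, φ (φ x) = x := by
    intro x
    rw [hφ, hφ, ← pow_mul, ← pow_two, ← hcard, FiniteField.pow_card]
  obtain ⟨ζ, t0, hζ, hζ2, ht0, ht1⟩ := exists_scalars hp hpne2 hf hq K hcard φ hφ
  obtain ⟨γ, hγ, hγT⟩ := exists_conj (GUgrp n φ) H (hHi 2 h2pi)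
  have mem_conj : ∀ (x g : GL (Fin n) K), g ∈ conjBy H x ↔ x * g * x⁻¹ ∈ H := by
    intro x g
    unfold conjBy
    rw [Subgroup.mem_map]
    constructor
    · rintro ⟨h, hh, rfl⟩
      have : x * ((MulAut.conj x⁻¹).toMonoidHom h) * x⁻¹ = h := by
        simp [mul_assoc]
      rwa [this]
    · intro h
      exact ⟨_, h, by simp [mul_assoc]⟩
  have hBP : ∀ g : GL (Fin n) K, γ⁻¹ * g * γ ∈ H → BP (g : Matrix (Fin n) (Fin n) K) := by
    intro g hg
    let eqv := H.equivMapOfInjective (MulAut.conj γ⁻¹⁻¹).toMonoidHom (MulAut.conj γ⁻¹⁻¹).injective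
    have hcardeq : Nat.card (conjBy H γ⁻¹) = Nat.card H := (Nat.card_congr eqv.toEquiv).symm
    have hs0 : Group.IsSolvable (conjBy H γ⁻¹) :=
      Group.isSolvable_of_surjective (f := eqv.toMonoidHom) eqv.surjective
    refine block_perm (p := p) h2K φ hφφ (conjBy H γ⁻¹) ?_ ?_ hs0 (by rwa [hcardeq])
      (by rwa [hcardeq]) g ?_
    · intro t ht
      rw [mem_conj, inv_inv] at ht
      have := (GUgrp n φ).mul_mem ((GUgrp n φ).mul_mem hγ (hHU ht)) ((GUgrp n φ).inv_mem hγ)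
      simpa [mul_assoc] using this
    · intro t ht hT
      rw [mem_conj, inv_inv]
      exact hγT t ht hT
    · rw [mem_conj, inv_inv]; exact hg
  let i0 : Fin n := ⟨0, by omega⟩
  let i1 : Fin n := ⟨1, by omega⟩
  have hi01 : i0 ≠ i1 := fun e => by simpa [i0, i1] using congrArg Fin.val e
  obtain ⟨c, hc⟩ : ∃ c : Equiv.Perm (Fin n), ∀ i, (c i : ℕ) = if (i : ℕ) + 1 = n then 0 else (i : ℕ) + 1 := by
    obtain ⟨m, rfl⟩ : ∃ m, n = m + 1 := ⟨n - 1, by omega⟩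
    refine ⟨finRotate (m + 1), fun i => ?_⟩
    rw [coe_finRotate]
    simp [Fin.ext_iff]
  obtain ⟨w, hw, hwg⟩ := exists_w φ c
  obtain ⟨y, hy, u, hui, hu, hyi, hyj, hyr⟩ :=
    exists_y hn φ hφφ ζ t0 hζ hζ2 ht0 ht1 i0 i1 hi01
  obtain ⟨y', hy', u', hui', hu', hyi', hyj', hyr'⟩ :=
    exists_y hn φ hφφ ζ t0 hζ hζ2 ht0 ht1 i1 i0 hi01.symm
  obtain ⟨w1, hw1, hw1B⟩ := exists_sl hn φ w hw
  obtain ⟨y1, hy1, hy1B⟩ := exists_sl hn φ y hy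
  obtain ⟨y1', hy1', hy1B'⟩ := exists_sl hn φ y' hy'
  have hmem : ∀ s ∈ GUgrp n φ ⊓ SLsub n K, γ⁻¹ * s⁻¹ * γ ∈ (H : Set (GL (Fin n) K)) *
      ((GUgrp n φ ⊓ SLsub n K : Subgroup (GL (Fin n) K)) : Set (GL (Fin n) K)) := by
    rintro s ⟨hs1, hs2⟩
    refine ⟨1, H.one_mem, γ⁻¹ * s⁻¹ * γ, ⟨?_, ?_⟩, one_mul _⟩
    · exact (GUgrp n φ).mul_mem ((GUgrp n φ).mul_mem ((GUgrp n φ).inv_mem hγ)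
        ((GUgrp n φ).inv_mem hs1)) hγ
    · have h1 : Matrix.det ((s⁻¹ : GL (Fin n) K) : Matrix (Fin n) (Fin n) K) = 1 :=
        (SLsub n K).inv_mem hs2
      change Matrix.det ((γ⁻¹ * s⁻¹ * γ : GL (Fin n) K) : Matrix (Fin n) (Fin n) K) = 1
      rw [Units.val_mul, Units.val_mul, Matrix.det_mul, Matrix.det_mul, h1, mul_one,
        ← Matrix.det_mul, γ.inv_mul, Matrix.det_one]
  refine ⟨_, _, _, hmem w1 hw1, hmem y1 hy1, hmem y1' hy1', ?_⟩
  rintro g ⟨⟨⟨hg0, hgw⟩, hgy⟩, hgy'⟩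
  have hconv : ∀ s : GL (Fin n) K, g ∈ conjBy H (γ⁻¹ * s⁻¹ * γ) →
      BP ((s⁻¹ * (γ * g * γ⁻¹) * s : GL (Fin n) K) : Matrix (Fin n) (Fin n) K) := by
    intro s hs
    rw [mem_conj] at hs
    refine hBP _ ?_
    convert hs using 1
    group
  obtain ⟨a, ha⟩ := core hn (γ * g * γ⁻¹) y y' c hc
    (hBP _ (by simpa [mul_assoc] using hg0))
    (by
      have := hw1B _ (hconv w1 hgw)
      intro k k' j j' hjj hk hk'
      rw [← hwg] at hk hk'
      exact this k k' j j' hjj hk hk')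
    i0 i1 rfl rfl (hy1B _ (hconv y1 hgy)) u hui hu hyi hyj hyr
    (hy1B' _ (hconv y1' hgy')) u' hui' hu' hyi' hyj' hyr'
  refine ⟨a, ?_⟩
  have e : g = γ⁻¹ * (γ * g * γ⁻¹) * γ := by group
  rw [e, Units.val_mul, Units.val_mul, ha, Matrix.mul_smul, mul_one, Matrix.smul_mul, γ.inv_mul]
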